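/- arXiv:2407.11903 — 2 statements merged into one kernel-verified Lean document; each statement's English description precedes it below -/
import Mathlib

section
/- (Jörgens–Calabi–Pogorelov theorem) Let n ≥ 2 and let u : ℝⁿ → ℝ be a smooth convex function satisfying det D²u(x) = 1 for every x ∈ ℝⁿ. Then u is a quadratic polynomial. -/
open Real

/-- Second partial derivative matrix (Hessian) of `u` at `x`. -/
noncomputable def hessianMatrix {n : ℕ} (u : EuclideanSpace ℝ (Fin n) → ℝ)
    (x : EuclideanSpace ℝ (Fin n)) : Matrix (Fin n) (Fin n) ℝ :=
  Matrix.of fun i j =>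
    fderiv ℝ (fun y => fderiv ℝ u y (EuclideanSpace.single j 1)) x (EuclideanSpace.single i 1)

/-- `u` is a quadratic polynomial. -/
def IsQuadraticPoly {n : ℕ} (u : EuclideanSpace ℝ (Fin n) → ℝ) : Prop :=
  ∃ (A : Matrix (Fin n) (Fin n) ℝ) (b : Fin n → ℝ) (c : ℝ), A.IsSymm ∧
    ∀ x, u x = (1/2) * (∑ i, ∑ j, A i j * x i * x j) + (∑ i, b i * x i) + c

/-!
Subtracting the tangent plane at a point `z` makes `u` nonnegative with `u z = 0` and compact
sections `{u ≤ h}`. On such a section consider, over all points `x` and directions `ξ`, the maxima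
of `(h - u)ⁿ⁺² (D_ξ u)² / D_ξ²u` and then of `(h - u)² (D_ξ³u)² / (D_ξ²u)³`. At a maximum choose a
basis in which the Hessian is the identity, and vary `x` along each basis vector while varying `ξ`
suitably. In the sum over the basis the derivatives of highest order are eliminated by the
differentiated equation. This gives `(D_ξ u)² ≤ C h D_ξ²u` on `{u ≤ h}` and
`h (D_ξ³u)² ≤ C (D_ξ²u)³` at `z`, with `C` depending on `n` only. Letting `h → ∞` shows that the
third derivatives of `u` vanish at `z`.
-/

open scoped ContDiff Topology

/-! ### Two-jets of functions of one real variable -/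

/-- `f` has value `a`, first derivative `b` and second derivative `c` at `t₀`. The witness `f'` is
only required to be the derivative of `f` near `t₀`. -/
def HasTwoJetAt (f : ℝ → ℝ) (a b c t₀ : ℝ) : Prop :=
  f t₀ = a ∧ ∃ f' : ℝ → ℝ, (∀ᶠ t in 𝓝 t₀, HasDerivAt f (f' t) t) ∧ f' t₀ = b ∧ HasDerivAt f' c t₀

namespace HasTwoJetAt

variable {f g : ℝ → ℝ} {a b c a' b' c' t₀ : ℝ}

theorem const_sub (k : ℝ) (hf : HasTwoJetAt f a b c t₀) :
    HasTwoJetAt (fun t => k - f t) (k - a) (-b) (-c) t₀ := by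
  obtain ⟨rfl, f', hf', rfl, hf''⟩ := hf
  exact ⟨rfl, fun t => -f' t, hf'.mono fun t ht => ht.const_sub k, rfl, hf''.neg⟩

theorem const_mul (k : ℝ) (hf : HasTwoJetAt f a b c t₀) :
    HasTwoJetAt (fun t => k * f t) (k * a) (k * b) (k * c) t₀ := by
  obtain ⟨rfl, f', hf', rfl, hf''⟩ := hf
  exact ⟨rfl, fun t => k * f' t, hf'.mono fun t ht => ht.const_mul k, rfl, hf''.const_mul k⟩

theorem sub (hf : HasTwoJetAt f a b c t₀) (hg : HasTwoJetAt g a' b' c' t₀) :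
    HasTwoJetAt (fun t => f t - g t) (a - a') (b - b') (c - c') t₀ := by
  obtain ⟨rfl, f', hf', rfl, hf''⟩ := hf
  obtain ⟨rfl, g', hg', rfl, hg''⟩ := hg
  exact ⟨rfl, fun t => f' t - g' t, (hf'.and hg').mono fun t ht => ht.1.sub ht.2, rfl,
    hf''.sub hg''⟩

theorem mul (hf : HasTwoJetAt f a b c t₀) (hg : HasTwoJetAt g a' b' c' t₀) :
    HasTwoJetAt (fun t => f t * g t) (a * a') (b * a' + a * b')
      (c * a' + 2 * (b * b') + a * c') t₀ := by
  obtain ⟨rfl, f', hf', rfl, hf''⟩ := hf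
  obtain ⟨rfl, g', hg', rfl, hg''⟩ := hg
  refine ⟨rfl, fun t => f' t * g t + f t * g' t, (hf'.and hg').mono fun t ht => ht.1.mul ht.2, rfl,
    ((hf''.mul hg'.self_of_nhds).add (hf'.self_of_nhds.mul hg'')).congr_deriv ?_⟩
  ring

theorem pow (hf : HasTwoJetAt f a b c t₀) (n : ℕ) :
    HasTwoJetAt (fun t => f t ^ n) (a ^ n) (n * a ^ (n - 1) * b)
      (n * ((n - 1 : ℕ) * a ^ (n - 1 - 1) * b ^ 2 + a ^ (n - 1) * c)) t₀ := by
  obtain ⟨rfl, f', hf', rfl, hf''⟩ := hf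
  refine ⟨rfl, fun t => n * f t ^ (n - 1) * f' t, hf'.mono fun t ht => ht.pow n, rfl,
    (((hf'.self_of_nhds.pow (n - 1)).const_mul (n : ℝ)).mul hf'').congr_deriv ?_⟩
  simp only [Pi.pow_apply]
  ring

theorem of_isLocalMax (hf : HasTwoJetAt f a b c t₀) (hmax : IsLocalMax f t₀) : b = 0 ∧ c ≤ 0 := by
  obtain ⟨rfl, f', hf', rfl, hf''⟩ := hf
  have hderiv : deriv f =ᶠ[𝓝 t₀] f' := hf'.mono fun t ht => ht.deriv
  have hcrit : f' t₀ = 0 := hmax.hasDerivAt_eq_zero hf'.self_of_nhds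
  refine ⟨hcrit, not_lt.mp fun hc => hc.ne' ?_⟩
  have hmin : IsLocalMin f t₀ := isLocalMin_of_deriv_deriv_pos
    (by rwa [hderiv.deriv_eq, hf''.deriv]) (hderiv.self_of_nhds.trans hcrit)
    hf'.self_of_nhds.continuousAt
  have hconst : f =ᶠ[𝓝 t₀] fun _ => f t₀ := by
    filter_upwards [hmax, hmin] with t hle hge using le_antisymm hle hge
  have hf'zero : f' =ᶠ[𝓝 t₀] fun _ => 0 := hderiv.symm.trans (by simpa using hconst.deriv)
  exact (hf''.congr_of_eventuallyEq hf'zero.symm).unique (hasDerivAt_const t₀ 0)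

end HasTwoJetAt

/-! ### Directional derivatives -/

/-- The derivative of `f` in the direction `v`, as an operator on functions so that it can be
iterated. -/
noncomputable def dirDeriv {E : Type*} [NormedAddCommGroup E] [NormedSpace ℝ E] (v : E)
    (f : E → ℝ) : E → ℝ :=
  fun x => fderiv ℝ f x v

local notation "D[" v "]" => dirDeriv v
local notation "D[" v "]^[" k "]" => Nat.iterate (dirDeriv v) k

section DirectionalDerivative

variable {E : Type*} [NormedAddCommGroup E] [NormedSpace ℝ E] {f g : E → ℝ}

theorem contDiff_dirDeriv (hf : ContDiff ℝ ∞ f) (v : E) : ContDiff ℝ ∞ (D[v] f) :=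
  (hf.fderiv_right (m := ∞) (by simp)).clm_apply contDiff_const

theorem continuous_uncurry_iterate_dirDeriv (hf : ContDiff ℝ ∞ f) (k : ℕ) :
    Continuous fun p : E × E => D[p.2]^[k] f p.1 := by
  suffices h : ContDiff ℝ ∞ fun p : E × E => D[p.2]^[k] f p.1 from h.continuous
  induction k with
  | zero => exact hf.comp contDiff_fst
  | succ k ih =>
    simp only [Function.iterate_succ_apply']
    refine ContDiff.fderiv_apply (n := ∞) (f := fun (p : E × E) y => D[p.2]^[k] f y)
      (g := Prod.fst) (k := Prod.snd) ?_ contDiff_fst contDiff_snd (m := ∞) (by simp)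
    exact ih.comp (contDiff_snd.prodMk (contDiff_snd.comp contDiff_fst))

theorem dirDeriv_dirDeriv_apply (hf : ContDiff ℝ ∞ f) (v w x : E) :
    D[v] (D[w] f) x = fderiv ℝ (fderiv ℝ f) x v w := by
  have hdiff : DifferentiableAt ℝ (fderiv ℝ f) x :=
    (hf.fderiv_right (m := ∞) (by simp)).differentiable (by simp) x
  unfold dirDeriv
  rw [fderiv_clm_apply hdiff (differentiableAt_const w)]
  simp

theorem dirDeriv_comm (hf : ContDiff ℝ ∞ f) (v w : E) : D[v] (D[w] f) = D[w] (D[v] f) := by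
  funext x
  rw [dirDeriv_dirDeriv_apply hf, dirDeriv_dirDeriv_apply hf]
  refine hf.contDiffAt.isSymmSndFDerivAt ?_ v w
  rw [minSmoothness_of_isRCLikeNormedField]
  exact WithTop.coe_le_coe.2 (le_top (a := (2 : ℕ∞)))

theorem dirDeriv_iterate_comm (hf : ContDiff ℝ ∞ f) (v w : E) (k : ℕ) :
    D[w] (D[v]^[k] f) = D[v]^[k] (D[w] f) := by
  induction k generalizing f with
  | zero => rfl
  | succ k ih =>
    rw [Function.iterate_succ_apply, Function.iterate_succ_apply, ih (contDiff_dirDeriv hf v),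
      dirDeriv_comm hf]

theorem dirDeriv_add (hf : ContDiff ℝ ∞ f) (hg : ContDiff ℝ ∞ g) (v : E) :
    D[v] (f + g) = D[v] f + D[v] g := by
  funext x
  simp [dirDeriv, fderiv_add (hf.differentiable (by simp) x) (hg.differentiable (by simp) x)]

theorem dirDeriv_const_smul (c : ℝ) (v : E) : D[v] (c • f) = c • D[v] f := by
  funext x
  simp [dirDeriv, fderiv_const_smul_field]

theorem iterate_dirDeriv_add (hf : ContDiff ℝ ∞ f) (hg : ContDiff ℝ ∞ g) (v : E) (k : ℕ) :
    D[v]^[k] (f + g) = D[v]^[k] f + D[v]^[k] g := by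
  induction k generalizing f g with
  | zero => rfl
  | succ k ih =>
    simp only [Function.iterate_succ_apply, dirDeriv_add hf hg,
      ih (contDiff_dirDeriv hf v) (contDiff_dirDeriv hg v)]

theorem iterate_dirDeriv_const_smul (c : ℝ) (v : E) (k : ℕ) :
    D[v]^[k] (c • f) = c • D[v]^[k] f := by
  induction k generalizing f with
  | zero => rfl
  | succ k ih => simp only [Function.iterate_succ_apply, dirDeriv_const_smul, ih]

theorem add_dirDeriv (v w : E) : D[v + w] f = D[v] f + D[w] f := by
  funext x
  simp [dirDeriv]

theorem zero_dirDeriv : D[(0 : E)] f = 0 := by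
  funext x
  simp [dirDeriv]

theorem sub_dirDeriv (v w : E) : D[v - w] f = D[v] f - D[w] f := by
  funext x
  simp [dirDeriv]

theorem smul_dirDeriv (c : ℝ) (v : E) : D[c • v] f = c • D[v] f := by
  funext x
  simp [dirDeriv]

theorem iterate_smul_dirDeriv (c : ℝ) (v : E) (k : ℕ) :
    D[c • v]^[k] f = c ^ k • D[v]^[k] f := by
  induction k with
  | zero => simp
  | succ k ih =>
    rw [Function.iterate_succ_apply', ih, dirDeriv_const_smul, smul_dirDeriv, smul_smul, ← pow_succ,
      Function.iterate_succ_apply']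

theorem sum_smul_dirDeriv {κ : Type*} (s : Finset κ) (c : κ → ℝ) (v : κ → E) (x : E) :
    D[∑ i ∈ s, c i • v i] f x = ∑ i ∈ s, c i * D[v i] f x := by
  simp [dirDeriv]

theorem hasDerivAt_comp_line (hf : ContDiff ℝ ∞ f) (x d : E) (t : ℝ) :
    HasDerivAt (fun s : ℝ => f (x + s • d)) (D[d] f (x + t • d)) t := by
  have hline : HasDerivAt (fun s : ℝ => x + s • d) d t := by
    simpa using ((hasDerivAt_id t).smul_const d).const_add x
  exact (hf.differentiable (by simp) _).hasFDerivAt.comp_hasDerivAt t hline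

theorem iterate_succ_dirDeriv_add_smul (hf : ContDiff ℝ ∞ f) (v w : E) (c : ℝ) (k : ℕ) :
    D[v + c • w]^[k + 1] f = D[v + c • w]^[k] (D[v] f) + c • D[v + c • w]^[k] (D[w] f) := by
  have hsmul : ContDiff ℝ ∞ (c • D[w] f) := (contDiff_dirDeriv hf w).const_smul c
  rw [Function.iterate_succ_apply, add_dirDeriv, smul_dirDeriv,
    iterate_dirDeriv_add (contDiff_dirDeriv hf v) hsmul, iterate_dirDeriv_const_smul]

theorem hasDerivAt_iterate_dirDeriv (hf : ContDiff ℝ ∞ f) (x d ξ b : E) (k : ℕ) (t : ℝ) :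
    HasDerivAt (fun s : ℝ => D[ξ + s • b]^[k] f (x + s • d))
      (D[ξ + t • b]^[k] (D[d] f) (x + t • d)
        + k * D[ξ + t • b]^[k - 1] (D[b] f) (x + t • d)) t := by
  induction k generalizing f with
  | zero => simpa using hasDerivAt_comp_line hf x d t
  | succ k ih =>
    have hξ := contDiff_dirDeriv hf ξ
    have hb := contDiff_dirDeriv hf b
    have hpred : k * D[ξ + t • b]^[k - 1 + 1] (D[b] f) (x + t • d)
        = k * D[ξ + t • b]^[k] (D[b] f) (x + t • d) := by
      cases k <;> simp
    simp only [iterate_succ_dirDeriv_add_smul hf]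
    refine ((ih hξ).add ((hasDerivAt_id t).mul (ih hb))).congr_deriv ?_
    rw [iterate_succ_dirDeriv_add_smul (contDiff_dirDeriv hf d), dirDeriv_comm hf ξ d,
      dirDeriv_comm hf b d]
    simp only [iterate_succ_dirDeriv_add_smul hb, dirDeriv_comm hf ξ b, Pi.add_apply, Pi.smul_apply,
      smul_eq_mul, id_eq, Nat.add_sub_cancel, Nat.cast_add, Nat.cast_one] at hpred ⊢
    linear_combination hpred

theorem hasTwoJetAt_iterate_dirDeriv (hf : ContDiff ℝ ∞ f) (x d ξ b : E) (k : ℕ) :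
    HasTwoJetAt (fun t : ℝ => D[ξ + t • b]^[k] f (x + t • d)) (D[ξ]^[k] f x)
      (D[d] (D[ξ]^[k] f) x + k * D[b] (D[ξ]^[k - 1] f) x)
      (D[d] (D[d] (D[ξ]^[k] f)) x + 2 * k * D[d] (D[b] (D[ξ]^[k - 1] f)) x
        + k * (k - 1 : ℕ) * D[b] (D[b] (D[ξ]^[k - 1 - 1] f)) x) 0 := by
  have hd := contDiff_dirDeriv hf d
  have hb := contDiff_dirDeriv hf b
  refine ⟨by simp, _, .of_forall (hasDerivAt_iterate_dirDeriv hf x d ξ b k), ?_,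
    ((hasDerivAt_iterate_dirDeriv hd x d ξ b k 0).add
      ((hasDerivAt_iterate_dirDeriv hb x d ξ b (k - 1) 0).const_mul (k : ℝ))).congr_deriv ?_⟩
  · simp only [zero_smul, add_zero, dirDeriv_iterate_comm hf]
  · simp only [zero_smul, add_zero, dirDeriv_iterate_comm hf, dirDeriv_iterate_comm hd,
      dirDeriv_iterate_comm hb, dirDeriv_comm hf b d]
    ring

theorem hasTwoJetAt_comp_line (hf : ContDiff ℝ ∞ f) (x d : E) :
    HasTwoJetAt (fun t : ℝ => f (x + t • d)) (f x) (D[d] f x) (D[d] (D[d] f) x) 0 := by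
  simpa using hasTwoJetAt_iterate_dirDeriv hf x d 0 0 0

end DirectionalDerivative

/-! ### Matrix-valued curves of constant determinant -/

section MatrixCurves

open scoped Matrix.Norms.Operator

variable {ι : Type*} {A : ℝ → Matrix ι ι ℝ} {A' : Matrix ι ι ℝ} {t : ℝ}

theorem hasDerivAt_matrix_iff [Finite ι] :
    HasDerivAt A A' t ↔ ∀ i j, HasDerivAt (fun s => A s i j) (A' i j) t :=
  have := Fintype.ofFinite ι
  ⟨fun h i j => hasDerivAt_pi.1 (hasDerivAt_pi.1 h i) j,
    fun h => hasDerivAt_pi.2 fun i => hasDerivAt_pi.2 fun j => h i j⟩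

variable [Fintype ι]

theorem hasDerivAt_matrix_trace (hA : HasDerivAt A A' t) :
    HasDerivAt (fun s => (A s).trace) A'.trace t :=
  (Matrix.traceLinearMap ι ℝ ℝ).toContinuousLinearMap.hasFDerivAt.comp_hasDerivAt t hA

variable [DecidableEq ι]

theorem hasDerivAt_matrix_inv (hA : HasDerivAt A A' t) (hunit : IsUnit (A t)) :
    HasDerivAt (fun s => (A s)⁻¹) (-((A t)⁻¹ * A' * (A t)⁻¹)) t := by
  obtain ⟨U, hU⟩ := hunit
  simp only [Matrix.nonsing_inv_eq_ringInverse]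
  refine ((hU ▸ hasFDerivAt_ringInverse (𝕜 := ℝ) U).comp_hasDerivAt t hA).congr_deriv ?_
  simp [← hU]

theorem hasDerivAt_matrix_det (hA : HasDerivAt A A' t) :
    HasDerivAt (fun s => (A s).det) ((A t).adjugate * A').trace t := by
  let detCMM : ContinuousMultilinearMap ℝ (fun _ : ι => ι → ℝ) ℝ :=
    { (Matrix.detRowAlternating (R := ℝ) (n := ι)).toMultilinearMap with
      cont := Continuous.matrix_det (A := fun M : Matrix ι ι ℝ => M) continuous_id }
  have hdet : HasDerivAt (fun s => (A s).det) (detCMM.linearDeriv (A t) A') t :=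
    (detCMM.hasFDerivAt (A t)).comp_hasDerivAt t hA
  refine hdet.congr_deriv ((detCMM.linearDeriv_apply _ _).trans ?_)
  rw [Matrix.trace_mul_comm]
  refine Finset.sum_congr rfl fun i _ => ?_
  calc ((A t).updateRow i (A' i)).det = (A t).transpose.cramer (A' i) i :=
        ((A t).cramer_transpose_apply _ i).symm
    _ = (A' * (A t).adjugate).diag i := by
        rw [Matrix.cramer_eq_adjugate_mulVec, ← Matrix.adjugate_transpose, Matrix.mulVec_transpose]
        rfl

/-- The three identities say that the first three derivatives of `log det A` vanish at `t`. -/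
theorem trace_deriv_of_det_eq_one {A A₁ A₂ : ℝ → Matrix ι ι ℝ} {A₃ : Matrix ι ι ℝ}
    (h₁ : ∀ s, HasDerivAt A (A₁ s) s) (h₂ : ∀ s, HasDerivAt A₁ (A₂ s) s) (h₃ : HasDerivAt A₂ A₃ t)
    (hdet : ∀ s, (A s).det = 1) (hone : A t = 1) :
    (A₁ t).trace = 0 ∧ (A₂ t).trace = (A₁ t * A₁ t).trace ∧
      A₃.trace = 3 * (A₁ t * A₂ t).trace - 2 * (A₁ t * A₁ t * A₁ t).trace := by
  have hinv : ∀ s, HasDerivAt (fun s => (A s)⁻¹) (-((A s)⁻¹ * A₁ s * (A s)⁻¹)) s := fun s =>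
    hasDerivAt_matrix_inv (h₁ s) ((Matrix.isUnit_iff_isUnit_det _).2 (by simp [hdet]))
  have htr₁ : ∀ s, ((A s)⁻¹ * A₁ s).trace = 0 := fun s => by
    have h := hasDerivAt_matrix_det (h₁ s)
    simp only [hdet] at h
    simpa [Matrix.inv_def, hdet] using h.unique (hasDerivAt_const s 1)
  have htr₂ : ∀ s, ((A s)⁻¹ * A₂ s).trace - ((A s)⁻¹ * A₁ s * ((A s)⁻¹ * A₁ s)).trace = 0 :=
      fun s => by
    have h := hasDerivAt_matrix_trace ((hinv s).fun_mul (h₂ s))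
    simp only [htr₁] at h
    rw [← h.unique (hasDerivAt_const s 0), Matrix.trace_add, Matrix.neg_mul, Matrix.trace_neg]
    simp only [Matrix.mul_assoc]
    ring
  have htr₃ := (hasDerivAt_matrix_trace ((hinv t).fun_mul h₃)).fun_sub
    (hasDerivAt_matrix_trace (((hinv t).fun_mul (h₂ t)).fun_mul ((hinv t).fun_mul (h₂ t))))
  simp only [htr₂] at htr₃
  replace htr₃ := htr₃.unique (hasDerivAt_const t 0)
  specialize htr₁ t
  specialize htr₂ t
  simp only [hone, inv_one, Matrix.one_mul, Matrix.mul_one] at htr₁ htr₂ htr₃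
  refine ⟨htr₁, by linarith, ?_⟩
  simp only [Matrix.trace_add, Matrix.trace_neg, Matrix.neg_mul, Matrix.mul_neg, Matrix.add_mul,
    Matrix.mul_add, Matrix.mul_assoc] at htr₃ ⊢
  rw [Matrix.trace_mul_comm (A₂ t) (A₁ t)] at htr₃
  linarith

end MatrixCurves

/-! ### The Hessian as a bilinear form -/

section Hessian

variable {E : Type*} [NormedAddCommGroup E] [NormedSpace ℝ E] {f u : E → ℝ} {x : E}

/-- The Hessian of `f` at `x` as a bilinear form. -/
noncomputable def hessianForm (f : E → ℝ) (x : E) : LinearMap.BilinForm ℝ E :=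
  ContinuousLinearMap.coeLM ℝ ∘ₗ (fderiv ℝ (fderiv ℝ f) x).toLinearMap

theorem hessianForm_apply (hf : ContDiff ℝ ∞ f) (v w : E) :
    hessianForm f x v w = D[v] (D[w] f) x :=
  (dirDeriv_dirDeriv_apply hf v w x).symm

theorem isSymm_hessianForm (hf : ContDiff ℝ ∞ f) : LinearMap.IsSymm (hessianForm f x) :=
  ⟨fun v w => by simp only [hessianForm_apply hf, dirDeriv_comm hf v w, RingHom.id_apply]⟩

theorem dirDeriv_dirDeriv_nonneg_of_convexOn (hf : ContDiff ℝ ∞ f) (hconv : ConvexOn ℝ Set.univ f)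
    (v x : E) : 0 ≤ D[v] (D[v] f) x := by
  have hjet := ((hasTwoJetAt_comp_line hf x v).const_sub (2 * f x)).sub
    (hasTwoJetAt_comp_line hf x (-v))
  have hmidpoint : ∀ t : ℝ, 2 * f x ≤ f (x + t • v) + f (x + t • -v) := fun t => by
    have h := hconv.2 (Set.mem_univ (x + t • v)) (Set.mem_univ (x + t • -v))
      (by norm_num : (0 : ℝ) ≤ 1 / 2) (by norm_num : (0 : ℝ) ≤ 1 / 2) (by norm_num)
    rw [show (1 / 2 : ℝ) • (x + t • v) + (1 / 2 : ℝ) • (x + t • -v) = x by module] at h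
    simp only [smul_eq_mul] at h
    linarith
  have hmax : IsLocalMax (fun t : ℝ => 2 * f x - f (x + t • v) - f (x + t • -v)) 0 :=
    .of_forall fun t => by
      simp only [zero_smul, add_zero]
      linarith [hmidpoint t]
  have hneg : D[-v] (D[-v] f) x = D[v] (D[v] f) x := by simp [← hessianForm_apply hf]
  linarith [(hjet.of_isLocalMax hmax).2]

variable {ι : Type*}

/-- The Gram matrix of the vectors `e i` with respect to the Hessian of `f` at `x`. For the
standard basis this is the matrix of second partial derivatives. -/
noncomputable def hessianGram (e : ι → E) (f : E → ℝ) (x : E) : Matrix ι ι ℝ :=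
  Matrix.of fun i j => D[e i] (D[e j] f) x

theorem hasDerivAt_hessianGram_line [Finite ι] (hf : ContDiff ℝ ∞ f) (e : ι → E) (x v : E)
    (t : ℝ) :
    HasDerivAt (fun s : ℝ => hessianGram e f (x + s • v)) (hessianGram e (D[v] f) (x + t • v)) t :=
  hasDerivAt_matrix_iff.2 fun i j => by
    have hj := contDiff_dirDeriv hf (e j)
    refine (hasDerivAt_comp_line (contDiff_dirDeriv hj (e i)) x v t).congr_deriv ?_
    simp only [hessianGram, Matrix.of_apply, dirDeriv_comm hj v, dirDeriv_comm hf v]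

variable [Fintype ι]

/-- The gradient of `f` at `x₀` with respect to the inner product making `e` orthonormal. -/
noncomputable def frameGrad (e : ι → E) (f : E → ℝ) (x₀ : E) : E := ∑ j, D[e j] f x₀ • e j

theorem dirDeriv_frameGrad (e : ι → E) (f g : E → ℝ) (x₀ : E) :
    D[frameGrad e f x₀] g x₀ = ∑ j, D[e j] f x₀ * D[e j] g x₀ :=
  sum_smul_dirDeriv _ _ _ _

theorem dirDeriv_frameGrad_comm (e : ι → E) (f g : E → ℝ) (x₀ : E) :
    D[frameGrad e f x₀] g x₀ = D[frameGrad e g x₀] f x₀ := by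
  simp only [dirDeriv_frameGrad, mul_comm]

theorem hessianGram_mul_hessianGram_apply (hf : ContDiff ℝ ∞ f) (e : ι → E) (g : E → ℝ) (x₀ : E)
    (i j : ι) :
    (hessianGram e f x₀ * hessianGram e g x₀) i j = D[frameGrad e (D[e i] f) x₀] (D[e j] g) x₀ := by
  simp only [dirDeriv_frameGrad, Matrix.mul_apply, hessianGram, Matrix.of_apply,
    dirDeriv_comm hf (e i)]

theorem hessianGram_mul_hessianGram_mul_hessianGram_apply_self (hf : ContDiff ℝ ∞ f) (e : ι → E)
    (x₀ : E) (i : ι) :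
    (hessianGram e f x₀ * hessianGram e f x₀ * hessianGram e f x₀) i i
      = D[frameGrad e (D[e i] f) x₀] (D[frameGrad e (D[e i] f) x₀] f) x₀ := by
  conv_rhs => rw [dirDeriv_frameGrad]
  rw [Matrix.mul_apply]
  refine Finset.sum_congr rfl fun k _ => ?_
  rw [hessianGram_mul_hessianGram_apply hf, dirDeriv_comm hf (frameGrad _ _ _) (e k), mul_comm]
  rfl

variable [DecidableEq ι]

theorem hessianGram_eq_toMatrix (hf : ContDiff ℝ ∞ f) (b : Module.Basis ι ℝ E) (x : E) :
    hessianGram b f x = LinearMap.BilinForm.toMatrix b (hessianForm f x) := by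
  ext i j
  simp [hessianGram, hessianForm_apply hf]

theorem exists_basis_toMatrix_eq_one {V : Type*} [AddCommGroup V] [Module ℝ V]
    (b : Module.Basis ι ℝ V) {B : LinearMap.BilinForm ℝ V} (hsymm : LinearMap.IsSymm B)
    (hpos : ∀ v ≠ 0, 0 < B v v) :
    ∃ e : Module.Basis ι ℝ V, LinearMap.BilinForm.toMatrix e B = 1 := by
  have := b.finiteDimensional_of_finite
  obtain ⟨v, hv⟩ := LinearMap.BilinForm.exists_orthogonal_basis hsymm
  let o := v.reindex (v.indexEquiv b)
  have ho : ∀ i, 0 < B (o i) (o i) := fun i => hpos _ (o.ne_zero i)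
  refine ⟨o.isUnitSMul (w := fun i => (√(B (o i) (o i)))⁻¹)
    fun i => (inv_ne_zero (sqrt_ne_zero'.2 (ho i))).isUnit, ?_⟩
  ext i j
  simp only [LinearMap.BilinForm.toMatrix_apply, Module.Basis.isUnitSMul_apply, map_smul,
    LinearMap.smul_apply, smul_eq_mul]
  rcases eq_or_ne i j with rfl | hij
  · have hsqrt := sqrt_pos.2 (ho i)
    rw [Matrix.one_apply_eq]
    field_simp
    rw [sq_sqrt (ho i).le]
  · have horth : B (o i) (o j) = 0 := by simpa [o] using hv (by simpa using hij)
    simp [Matrix.one_apply_ne hij, horth]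

/-- `u` is a smooth convex function on all of `E` with `det D²u = c` for a constant `c ≠ 0`, where
the determinant is computed in the basis `b`. -/
structure IsMongeAmpereSolution (b : Module.Basis ι ℝ E) (c : ℝ) (u : E → ℝ) : Prop where
  contDiff : ContDiff ℝ ∞ u
  convexOn : ConvexOn ℝ Set.univ u
  det_eq (x : E) : (hessianGram b u x).det = c
  const_ne_zero : c ≠ 0

/-- The basis `e` is orthonormal for the Hessian of `u` at `x₀`, and `u` solves `det D²u = 1` in the
coordinates given by `e`. -/
structure IsHessianFrame (u : E → ℝ) (x₀ : E) (e : Module.Basis ι ℝ E) : Prop where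
  gram_eq_one : hessianGram e u x₀ = 1
  det_eq_one (x : E) : (hessianGram e u x).det = 1

namespace IsMongeAmpereSolution

variable {b : Module.Basis ι ℝ E} {c : ℝ}

theorem dirDeriv_dirDeriv_nonneg (hu : IsMongeAmpereSolution b c u) (v x : E) :
    0 ≤ D[v] (D[v] u) x :=
  dirDeriv_dirDeriv_nonneg_of_convexOn hu.contDiff hu.convexOn v x

theorem dirDeriv_dirDeriv_pos (hu : IsMongeAmpereSolution b c u) {v : E} (hv : v ≠ 0) (x : E) :
    0 < D[v] (D[v] u) x := by
  have hnondeg : (hessianForm u x).Nondegenerate :=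
    LinearMap.BilinForm.nondegenerate_of_det_ne_zero _ b
      (by rw [← hessianGram_eq_toMatrix hu.contDiff, hu.det_eq]; exact hu.const_ne_zero)
  have hnonneg : ∀ w, 0 ≤ hessianForm u x w w := fun w => by
    simpa only [hessianForm_apply hu.contDiff] using hu.dirDeriv_dirDeriv_nonneg w x
  have hdefinite := (LinearMap.BilinForm.nondegenerate_iff (hessianForm u x) hnonneg
    (isSymm_hessianForm hu.contDiff)).1 hnondeg
  rw [← hessianForm_apply hu.contDiff]
  exact lt_of_le_of_ne' (hnonneg v) fun h => hv ((hdefinite v).1 h)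

theorem exists_isHessianFrame (hu : IsMongeAmpereSolution b c u) (x₀ : E) :
    ∃ e : Module.Basis ι ℝ E, IsHessianFrame u x₀ e := by
  obtain ⟨e, he⟩ := exists_basis_toMatrix_eq_one b (isSymm_hessianForm (x := x₀) hu.contDiff)
    fun v hv => by
      simpa only [hessianForm_apply hu.contDiff] using hu.dirDeriv_dirDeriv_pos hv x₀
  rw [← hessianGram_eq_toMatrix hu.contDiff] at he
  have hdet : ∀ x, (hessianGram e u x).det = (b.toMatrix e).det * c * (b.toMatrix e).det :=
      fun x => by
    rw [hessianGram_eq_toMatrix hu.contDiff, ← LinearMap.BilinForm.toMatrix_mul_basis_toMatrix b,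
      ← hessianGram_eq_toMatrix hu.contDiff, Matrix.det_mul, Matrix.det_mul, Matrix.det_transpose,
      hu.det_eq]
  exact ⟨e, he, fun x => by rw [hdet, ← hdet x₀, he, Matrix.det_one]⟩

end IsMongeAmpereSolution

namespace IsHessianFrame

variable {x₀ : E} {e : Module.Basis ι ℝ E}

theorem dirDeriv_dirDeriv_self (he : IsHessianFrame u x₀ e) (i : ι) :
    D[e i] (D[e i] u) x₀ = 1 := by
  simpa [hessianGram] using congrFun (congrFun he.gram_eq_one i) i

theorem repr_eq (he : IsHessianFrame u x₀ e) (w : E) (j : ι) :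
    e.repr w j = D[w] (D[e j] u) x₀ := by
  have hgram : ∀ i, D[e i] (D[e j] u) x₀ = if i = j then 1 else 0 := fun i => by
    simpa [hessianGram, Matrix.one_apply] using congrFun (congrFun he.gram_eq_one i) j
  conv_rhs => rw [← e.sum_repr w, sum_smul_dirDeriv]
  simp [hgram]

theorem dirDeriv_eq_sum (he : IsHessianFrame u x₀ e) (f : E → ℝ) (w : E) :
    D[w] f x₀ = ∑ j, D[w] (D[e j] u) x₀ * D[e j] f x₀ := by
  conv_lhs => rw [← e.sum_repr w, sum_smul_dirDeriv]
  simp only [he.repr_eq]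

theorem dirDeriv_dirDeriv_frameGrad (he : IsHessianFrame u x₀ e) (hu : ContDiff ℝ ∞ u) (f : E → ℝ)
    (w : E) : D[w] (D[frameGrad e f x₀] u) x₀ = D[w] f x₀ := by
  rw [dirDeriv_comm hu, dirDeriv_frameGrad, he.dirDeriv_eq_sum f w]
  exact Finset.sum_congr rfl fun j _ => by rw [dirDeriv_comm hu, mul_comm]

theorem dirDeriv_sq_le (he : IsHessianFrame u x₀ e) (hu : ContDiff ℝ ∞ u) (f : E → ℝ) (w : E) :
    (D[w] f x₀) ^ 2 ≤ D[w] (D[w] u) x₀ * D[frameGrad e f x₀] f x₀ := by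
  rw [he.dirDeriv_eq_sum f w, he.dirDeriv_eq_sum (D[w] u) w, dirDeriv_frameGrad]
  simp only [dirDeriv_comm hu _ w, ← sq]
  exact Finset.sum_mul_sq_le_sq_mul_sq _ _ _

theorem trace_hessianGram_dirDeriv (he : IsHessianFrame u x₀ e) (hu : ContDiff ℝ ∞ u) (v : E) :
    (hessianGram e (D[v] u) x₀).trace = 0 ∧
    (hessianGram e (D[v] (D[v] u)) x₀).trace
      = (hessianGram e (D[v] u) x₀ * hessianGram e (D[v] u) x₀).trace ∧
    (hessianGram e (D[v] (D[v] (D[v] u))) x₀).trace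
      = 3 * (hessianGram e (D[v] u) x₀ * hessianGram e (D[v] (D[v] u)) x₀).trace
        - 2 * (hessianGram e (D[v] u) x₀ * hessianGram e (D[v] u) x₀
          * hessianGram e (D[v] u) x₀).trace := by
  have hv := contDiff_dirDeriv hu v
  have hvv := contDiff_dirDeriv hv v
  have h := trace_deriv_of_det_eq_one (t := 0) (hasDerivAt_hessianGram_line hu e x₀ v)
    (hasDerivAt_hessianGram_line hv e x₀ v) (hasDerivAt_hessianGram_line hvv e x₀ v 0)
    (fun s => he.det_eq_one _) (by simpa using he.gram_eq_one)
  simpa only [zero_smul, add_zero] using h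

theorem sum_laplacian_dirDeriv (he : IsHessianFrame u x₀ e) (hu : ContDiff ℝ ∞ u) (v : E) :
    ∑ i, D[e i] (D[e i] (D[v] u)) x₀ = 0 :=
  (he.trace_hessianGram_dirDeriv hu v).1

theorem sum_laplacian_dirDeriv_dirDeriv (he : IsHessianFrame u x₀ e) (hu : ContDiff ℝ ∞ u) (v : E) :
    ∑ i, D[e i] (D[e i] (D[v] (D[v] u))) x₀
      = ∑ i, D[frameGrad e (D[e i] (D[v] u)) x₀] (D[e i] (D[v] u)) x₀ := by
  have hv := contDiff_dirDeriv hu v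
  exact (he.trace_hessianGram_dirDeriv hu v).2.1.trans
    (Finset.sum_congr rfl fun i _ => hessianGram_mul_hessianGram_apply hv e _ x₀ i i)

theorem sum_laplacian_dirDeriv_dirDeriv_dirDeriv (he : IsHessianFrame u x₀ e) (hu : ContDiff ℝ ∞ u)
    (v : E) :
    ∑ i, D[e i] (D[e i] (D[v] (D[v] (D[v] u)))) x₀
      = ∑ i, (3 * D[frameGrad e (D[e i] (D[v] u)) x₀] (D[e i] (D[v] (D[v] u))) x₀
        - 2 * D[frameGrad e (D[e i] (D[v] u)) x₀]
            (D[frameGrad e (D[e i] (D[v] u)) x₀] (D[v] u)) x₀) := by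
  have hv := contDiff_dirDeriv hu v
  refine (he.trace_hessianGram_dirDeriv hu v).2.2.trans ?_
  simp only [Matrix.trace, Matrix.diag_apply, Finset.mul_sum, ← Finset.sum_sub_distrib,
    hessianGram_mul_hessianGram_apply hv, hessianGram_mul_hessianGram_mul_hessianGram_apply_self hv]

end IsHessianFrame

end Hessian

/-! ### Quadratic forms of trace-free matrices -/

section TraceFree

variable {ι : Type*} [Fintype ι] {M : Matrix ι ι ℝ}

theorem sum_sum_sq_vecMulVec_sub_smul_one [DecidableEq ι] (p : ι → ℝ) (c : ℝ) :
    ∑ i, ∑ j, (Matrix.vecMulVec p p - c • 1) i j ^ 2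
      = (p ⬝ᵥ p) ^ 2 - 2 * c * (p ⬝ᵥ p) + Fintype.card ι * c ^ 2 := by
  have hentry : ∀ i j, (Matrix.vecMulVec p p - c • 1) i j ^ 2
      = (p i * p i) * (p j * p j) + if i = j then c ^ 2 - 2 * c * (p i * p i) else 0 := by
    intro i j
    rcases eq_or_ne i j with rfl | hij
    · simp only [Matrix.sub_apply, Matrix.vecMulVec_apply, Matrix.smul_apply, Matrix.one_apply_eq,
        smul_eq_mul, if_true]
      ring
    · simp only [Matrix.sub_apply, Matrix.vecMulVec_apply, Matrix.smul_apply,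
        Matrix.one_apply_ne hij, if_neg hij, smul_zero, sub_zero, add_zero]
      ring
  simp only [hentry, Finset.sum_add_distrib, Finset.sum_ite_eq, Finset.mem_univ, if_true,
    Finset.sum_sub_distrib, ← Finset.mul_sum, ← Finset.sum_mul, dotProduct, Finset.sum_const,
    Finset.card_univ, nsmul_eq_mul]
  ring

theorem sum_sum_mul_vecMulVec_sub_smul_one [DecidableEq ι] (hM : M.trace = 0) (p : ι → ℝ)
    (c : ℝ) :
    ∑ i, ∑ j, M i j * (Matrix.vecMulVec p p - c • 1) i j = p ⬝ᵥ M.mulVec p := by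
  have htrace : ∑ i, M i i = 0 := hM
  simp only [Matrix.sub_apply, Matrix.vecMulVec_apply, Matrix.smul_apply, Matrix.one_apply,
    smul_eq_mul, mul_sub, mul_ite, mul_one, mul_zero, Finset.sum_sub_distrib, Finset.sum_ite_eq,
    Finset.mem_univ, if_true, ← Finset.sum_mul, htrace, zero_mul, sub_zero, dotProduct,
    Matrix.mulVec, Finset.mul_sum]
  exact Finset.sum_congr rfl fun i _ => Finset.sum_congr rfl fun j _ => by ring

theorem card_mul_sq_dotProduct_mulVec_le (hM : M.trace = 0) (p : ι → ℝ) :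
    Fintype.card ι * (p ⬝ᵥ M.mulVec p) ^ 2
      ≤ (Fintype.card ι - 1) * (∑ i, ∑ j, M i j ^ 2) * (p ⬝ᵥ p) ^ 2 := by
  classical
  rcases isEmpty_or_nonempty ι with hι | hι
  · simp
  set c := (p ⬝ᵥ p) / Fintype.card ι with hc
  have hcauchy := Finset.sum_mul_sq_le_sq_mul_sq (Finset.univ : Finset (ι × ι))
    (fun z => M z.1 z.2) fun z => (Matrix.vecMulVec p p - c • 1) z.1 z.2
  simp only [← Finset.univ_product_univ, Finset.sum_product,
    sum_sum_mul_vecMulVec_sub_smul_one hM, sum_sum_sq_vecMulVec_sub_smul_one] at hcauchy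
  calc Fintype.card ι * (p ⬝ᵥ M.mulVec p) ^ 2
      ≤ Fintype.card ι * ((∑ i, ∑ j, M i j ^ 2)
        * ((p ⬝ᵥ p) ^ 2 - 2 * c * (p ⬝ᵥ p) + Fintype.card ι * c ^ 2)) := by gcongr
    _ = (Fintype.card ι - 1) * (∑ i, ∑ j, M i j ^ 2) * (p ⬝ᵥ p) ^ 2 := by
      rw [hc]
      field_simp
      ring

end TraceFree

/-! ### The gradient estimate at a maximum point -/

theorem isLocalMax_sub_comp_line {E : Type*} [NormedAddCommGroup E] [NormedSpace ℝ E]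
    {F G : E → E → ℝ} {x₀ ξ₀ : E} (hle : ∀ᶠ x in 𝓝 x₀, ∀ ξ, F x ξ ≤ G x ξ)
    (heq : F x₀ ξ₀ = G x₀ ξ₀) (d b : E) :
    IsLocalMax (fun t : ℝ => F (x₀ + t • d) (ξ₀ + t • b) - G (x₀ + t • d) (ξ₀ + t • b)) 0 := by
  have hline : Filter.Tendsto (fun t : ℝ => x₀ + t • d) (𝓝 0) (𝓝 x₀) := by
    have hcont : Continuous fun t : ℝ => x₀ + t • d := by fun_prop
    simpa using hcont.tendsto 0
  filter_upwards [hline.eventually hle] with t ht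
  simp only [zero_smul, add_zero, heq, sub_self]
  linarith [ht (ξ₀ + t • b)]

theorem HasTwoJetAt.pow_mul_sq_sub_of_isLocalMax {S G H : ℝ → ℝ} {s s₁ s₂ P y g₂ h₂ t₀ : ℝ}
    (n : ℕ) (hS : HasTwoJetAt S s s₁ s₂ t₀) (hG : HasTwoJetAt G P y g₂ t₀)
    (hH : HasTwoJetAt H P y h₂ t₀) (hs : 0 < s) (hP : 0 < P)
    (hmax : IsLocalMax (fun t => S t ^ (n + 2) * G t ^ 2 - s ^ (n + 2) * P * H t) t₀) :
    s * y = -((n + 2) * P * s₁) ∧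
      -((n + 2) * (n + 3) * s₁ ^ 2 * P) + (n + 2) * s * s₂ * P + s ^ 2 * (2 * g₂ - h₂) ≤ 0 := by
  obtain ⟨hfirst, hsecond⟩ :=
    (((hS.pow (n + 2)).mul (hG.pow 2)).sub (hH.const_mul _)).of_isLocalMax hmax
  norm_num [pow_succ] at hfirst hsecond
  have hy : s * y = -((n + 2) * P * s₁) := by
    have hpos : s ^ n * s * P ≠ 0 := by positivity
    exact mul_left_cancel₀ hpos (by linear_combination hfirst)
  refine ⟨hy, ?_⟩
  have hpos : 0 < s ^ n * P := by positivity
  refine nonpos_of_mul_nonpos_right (a := s ^ n * P) ?_ hpos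
  linear_combination hsecond - s ^ n * (2 * s * y + 2 * (n + 2) * P * s₁) * hy

/-- The elementary inequality closing the gradient estimate: `hgrad` determines the third derivative
`T`, the trace-free bound `hthird` then bounds `N` from below, and `hlaplacian` from above. -/
theorem gradient_le_of_variation {n s P T N : ℝ} (hn : 1 ≤ n) (hs : 0 < s) (hP : 0 < P)
    (hthird : n * T ^ 2 ≤ (n - 1) * N * P ^ 2) (hgrad : s * (2 * P - T) = (n + 2) * P * P)
    (hlaplacian : -((n + 2) * (n + 3) * P ^ 2) - n * (n + 2) * s * P + s ^ 2 * (2 * n + N) ≤ 0) :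
    P ≤ s * (n * (n + 3)) := by
  have hlower : n * (2 * s - (n + 2) * P) ^ 2 ≤ (n - 1) * (s ^ 2 * N) := by
    refine le_of_mul_le_mul_left ?_ (sq_pos_of_pos hP)
    calc P ^ 2 * (n * (2 * s - (n + 2) * P) ^ 2) = s ^ 2 * (n * T ^ 2) := by
          rw [show P ^ 2 * (n * (2 * s - (n + 2) * P) ^ 2)
            = n * (2 * (s * P) - (n + 2) * P * P) ^ 2 by ring, ← hgrad]
          ring
      _ ≤ s ^ 2 * ((n - 1) * N * P ^ 2) := by gcongr
      _ = P ^ 2 * ((n - 1) * (s ^ 2 * N)) := by ring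
  have hupper := mul_le_mul_of_nonneg_left hlaplacian (sub_nonneg.2 hn)
  have hcombined : (n + 2) * P * (3 * P) ≤ (n + 2) * P * (s * (n * (n + 3))) := by
    have : 0 ≤ (n - 1) * (2 * n * s ^ 2) := by positivity
    have : 0 ≤ n * (4 * s ^ 2) := by positivity
    linarith
  linarith [le_of_mul_le_mul_left hcombined (by positivity)]

section PointwiseEstimates

variable {E : Type*} [NormedAddCommGroup E] [NormedSpace ℝ E] {ι : Type*} [Fintype ι]
  [DecidableEq ι] {u : E → ℝ} {x₀ : E} {e : Module.Basis ι ℝ E}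

namespace IsHessianFrame

/-- The direction `grad u` is varied by `e i - grad (D_i D_v u)` because this makes the first
derivatives of `D_ξ u` and `D_ξ D_ξ u` agree. -/
theorem hasTwoJetAt_gradient_variation (he : IsHessianFrame u x₀ e) (hu : ContDiff ℝ ∞ u) {v b : E}
    (hv : v = frameGrad e u x₀) {i : ι} (hb : b = e i - frameGrad e (D[e i] (D[v] u)) x₀) :
    HasTwoJetAt (fun t : ℝ => D[v + t • b] u (x₀ + t • e i)) (D[v] u x₀)
      (2 * D[e i] u x₀ - D[e i] (D[v] (D[v] u)) x₀) (2 - D[e i] (D[e i] (D[v] u)) x₀) 0 ∧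
    HasTwoJetAt (fun t : ℝ => D[v + t • b] (D[v + t • b] u) (x₀ + t • e i)) (D[v] u x₀)
      (2 * D[e i] u x₀ - D[e i] (D[v] (D[v] u)) x₀)
      (D[e i] (D[e i] (D[v] (D[v] u))) x₀
        - 2 * D[frameGrad e (D[e i] (D[v] u)) x₀] (D[e i] (D[v] u)) x₀ + 2) 0 := by
  set f := D[e i] (D[v] u) with hf
  have hvu := contDiff_dirDeriv hu v
  have hdir : ∀ w, D[w] (D[v] u) x₀ = D[w] u x₀ := fun w => by
    rw [hv, he.dirDeriv_dirDeriv_frameGrad hu]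
  have hb_u : D[b] u x₀ = D[e i] u x₀ - D[e i] (D[v] (D[v] u)) x₀ := by
    rw [hb, sub_dirDeriv, Pi.sub_apply, dirDeriv_frameGrad_comm, ← hv, hf, dirDeriv_comm hvu]
  have hb_f : D[b] f x₀ = D[e i] f x₀ - D[frameGrad e f x₀] f x₀ := by
    rw [hb, sub_dirDeriv, Pi.sub_apply]
  have hbu : ∀ w, D[w] (D[b] u) x₀ = D[w] (D[e i] u) x₀ - D[w] f x₀ := fun w => by
    rw [dirDeriv_comm hu, hb, sub_dirDeriv, Pi.sub_apply, dirDeriv_comm hu,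
      dirDeriv_comm hu _ w, he.dirDeriv_dirDeriv_frameGrad hu]
  have hib : D[e i] (D[b] u) x₀ = 1 - D[e i] f x₀ := by rw [hbu, he.dirDeriv_dirDeriv_self]
  have hbi : D[b] (D[e i] u) x₀ = 1 - D[e i] f x₀ := by rw [dirDeriv_comm hu, hib]
  have hibv : D[e i] (D[b] (D[v] u)) x₀ = D[b] f x₀ := by rw [dirDeriv_comm hvu]
  have hG := hasTwoJetAt_iterate_dirDeriv hu x₀ (e i) v b 1
  have hH := hasTwoJetAt_iterate_dirDeriv hu x₀ (e i) v b 2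
  norm_num at hG hH
  refine ⟨?_, ?_⟩
  · convert hG using 1
    · rw [hb_u, hdir]
      ring
    · rw [hib]
      ring
  · convert hH using 1
    · rw [hdir]
    · rw [hdir b, hb_u]
      ring
    · rw [hibv, hbu b, hbi, hb_f]
      ring

theorem gradient_variation (he : IsHessianFrame u x₀ e) (hu : ContDiff ℝ ∞ u) {h : ℝ}
    (hs : 0 < h - u x₀) {v : E} (hv : v = frameGrad e u x₀) (hP : 0 < D[v] u x₀) (n : ℕ)
    (hmax : ∀ᶠ x in 𝓝 x₀, ∀ ξ, (h - u x) ^ (n + 2) * (D[ξ] u x) ^ 2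
      ≤ (h - u x₀) ^ (n + 2) * D[v] u x₀ * D[ξ] (D[ξ] u) x) (i : ι) :
    (h - u x₀) * (2 * D[e i] u x₀ - D[e i] (D[v] (D[v] u)) x₀)
        = (n + 2) * D[v] u x₀ * D[e i] u x₀ ∧
      -((n + 2) * (n + 3) * D[e i] u x₀ ^ 2 * D[v] u x₀) - (n + 2) * (h - u x₀) * D[v] u x₀
        + (h - u x₀) ^ 2 * (2 - 2 * D[e i] (D[e i] (D[v] u)) x₀
          - D[e i] (D[e i] (D[v] (D[v] u))) x₀
          + 2 * D[frameGrad e (D[e i] (D[v] u)) x₀] (D[e i] (D[v] u)) x₀) ≤ 0 := by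
  obtain ⟨hG, hH⟩ := he.hasTwoJetAt_gradient_variation hu hv (i := i) rfl
  have hvv : D[v] (D[v] u) x₀ = D[v] u x₀ := by rw [hv, he.dirDeriv_dirDeriv_frameGrad hu]
  have hlocal := isLocalMax_sub_comp_line hmax (by rw [hvv]; ring) (e i)
    (e i - frameGrad e (D[e i] (D[v] u)) x₀)
  obtain ⟨hfirst, hsecond⟩ := ((hasTwoJetAt_comp_line hu x₀ (e i)).const_sub h
    ).pow_mul_sq_sub_of_isLocalMax n hG hH hs hP hlocal
  rw [he.dirDeriv_dirDeriv_self] at hsecond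
  exact ⟨by linear_combination hfirst, by linear_combination hsecond⟩

theorem card_mul_sq_dirDeriv_dirDeriv_dirDeriv_le (he : IsHessianFrame u x₀ e)
    (hu : ContDiff ℝ ∞ u) (v : E) :
    Fintype.card ι * (D[v] (D[v] (D[v] u)) x₀) ^ 2
      ≤ (Fintype.card ι - 1) * (∑ i, D[frameGrad e (D[e i] (D[v] u)) x₀] (D[e i] (D[v] u)) x₀)
        * (D[v] (D[v] u) x₀) ^ 2 := by
  have hvu := contDiff_dirDeriv hu v
  set p : ι → ℝ := fun i => D[v] (D[e i] u) x₀ with hp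
  have hdot : p ⬝ᵥ p = D[v] (D[v] u) x₀ := by
    rw [he.dirDeriv_eq_sum (D[v] u) v]
    simp only [dotProduct, hp, dirDeriv_comm hu v]
  have hform : p ⬝ᵥ (hessianGram e (D[v] u) x₀).mulVec p = D[v] (D[v] (D[v] u)) x₀ := by
    rw [he.dirDeriv_eq_sum (D[v] (D[v] u)) v]
    refine Finset.sum_congr rfl fun i _ => congrArg _ ?_
    rw [dirDeriv_comm hvu, he.dirDeriv_eq_sum (D[e i] (D[v] u)) v]
    exact Finset.sum_congr rfl fun j _ => by
      rw [mul_comm, dirDeriv_comm hvu (e j)]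
      rfl
  have hnorm : ∑ i, ∑ j, hessianGram e (D[v] u) x₀ i j ^ 2
      = ∑ i, D[frameGrad e (D[e i] (D[v] u)) x₀] (D[e i] (D[v] u)) x₀ := by
    simp only [dirDeriv_frameGrad, ← sq, hessianGram, Matrix.of_apply, dirDeriv_comm hvu]
  rw [← hdot, ← hform, ← hnorm]
  exact card_mul_sq_dotProduct_mulVec_le (he.trace_hessianGram_dirDeriv hu v).1 p

theorem sum_gradient_variation (he : IsHessianFrame u x₀ e) (hu : ContDiff ℝ ∞ u) {h : ℝ}
    (hs : 0 < h - u x₀) {v : E} (hv : v = frameGrad e u x₀) (hP : 0 < D[v] u x₀) (n : ℕ)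
    (hmax : ∀ᶠ x in 𝓝 x₀, ∀ ξ, (h - u x) ^ (n + 2) * (D[ξ] u x) ^ 2
      ≤ (h - u x₀) ^ (n + 2) * D[v] u x₀ * D[ξ] (D[ξ] u) x) :
    (h - u x₀) * (2 * D[v] u x₀ - D[v] (D[v] (D[v] u)) x₀) = (n + 2) * D[v] u x₀ * D[v] u x₀ ∧
      -((n + 2) * (n + 3) * D[v] u x₀ ^ 2)
        - Fintype.card ι * (n + 2) * (h - u x₀) * D[v] u x₀
        + (h - u x₀) ^ 2 * (2 * Fintype.card ι
          + ∑ i, D[frameGrad e (D[e i] (D[v] u)) x₀] (D[e i] (D[v] u)) x₀) ≤ 0 := by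
  have hvar := he.gradient_variation hu hs hv hP n hmax
  have hv_sum : ∀ f, D[v] f x₀ = ∑ i, D[e i] u x₀ * D[e i] f x₀ := fun f => by
    rw [hv, dirDeriv_frameGrad]
  constructor
  · calc (h - u x₀) * (2 * D[v] u x₀ - D[v] (D[v] (D[v] u)) x₀)
        = ∑ i, D[e i] u x₀
          * ((h - u x₀) * (2 * D[e i] u x₀ - D[e i] (D[v] (D[v] u)) x₀)) := by
          rw [hv_sum u, hv_sum (D[v] (D[v] u)), Finset.mul_sum, ← Finset.sum_sub_distrib,
            Finset.mul_sum]
          exact Finset.sum_congr rfl fun i _ => by ring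
      _ = (n + 2) * D[v] u x₀ * D[v] u x₀ := by
          simp only [(hvar _).1, mul_left_comm _ ((n + 2) * D[v] u x₀), ← Finset.mul_sum, ← hv_sum]
  · have hsum := Finset.sum_nonpos fun i (_ : i ∈ Finset.univ) => (hvar i).2
    simp only [Finset.sum_add_distrib, Finset.sum_sub_distrib, Finset.sum_neg_distrib,
      ← Finset.mul_sum, ← Finset.sum_mul, he.sum_laplacian_dirDeriv hu,
      he.sum_laplacian_dirDeriv_dirDeriv hu, sq (D[_] u x₀), ← hv_sum, Finset.sum_const,
      Finset.card_univ, nsmul_eq_mul] at hsum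
    linear_combination hsum

theorem dirDeriv_frameGrad_self_le (he : IsHessianFrame u x₀ e) (hu : ContDiff ℝ ∞ u) {h : ℝ}
    (hs : 0 < h - u x₀) {v : E} (hv : v = frameGrad e u x₀) (hP : 0 < D[v] u x₀)
    (hmax : ∀ᶠ x in 𝓝 x₀, ∀ ξ, (h - u x) ^ (Fintype.card ι + 2) * (D[ξ] u x) ^ 2
      ≤ (h - u x₀) ^ (Fintype.card ι + 2) * D[v] u x₀ * D[ξ] (D[ξ] u) x) :
    D[v] u x₀ ≤ (h - u x₀) * (Fintype.card ι * (Fintype.card ι + 3)) := by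
  have hcard : (1 : ℝ) ≤ Fintype.card ι := by
    have hι : Nonempty ι := not_isEmpty_iff.1 fun hempty => by
      simp [hv, dirDeriv_frameGrad] at hP
    exact_mod_cast Fintype.card_pos
  have hvv : D[v] (D[v] u) x₀ = D[v] u x₀ := by rw [hv, he.dirDeriv_dirDeriv_frameGrad hu]
  have hthird := he.card_mul_sq_dirDeriv_dirDeriv_dirDeriv_le hu v
  rw [hvv] at hthird
  obtain ⟨hgrad, hlaplacian⟩ := he.sum_gradient_variation hu hs hv hP _ hmax
  exact gradient_le_of_variation hcard hs hP hthird hgrad hlaplacian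

theorem gradient_maximum_le (he : IsHessianFrame u x₀ e) (hu : ContDiff ℝ ∞ u) {h m : ℝ} {ξ₀ : E}
    (hs : 0 < h - u x₀) (hξ₀ : 0 < D[ξ₀] (D[ξ₀] u) x₀)
    (hmax : ∀ᶠ x in 𝓝 x₀, ∀ ξ,
      (h - u x) ^ (Fintype.card ι + 2) * (D[ξ] u x) ^ 2 ≤ m * D[ξ] (D[ξ] u) x)
    (heq : (h - u x₀) ^ (Fintype.card ι + 2) * (D[ξ₀] u x₀) ^ 2 = m * D[ξ₀] (D[ξ₀] u) x₀) :
    m ≤ (h - u x₀) ^ (Fintype.card ι + 3) * (Fintype.card ι * (Fintype.card ι + 3)) := by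
  set v := frameGrad e u x₀ with hv
  have hvv : D[v] (D[v] u) x₀ = D[v] u x₀ := by rw [hv, he.dirDeriv_dirDeriv_frameGrad hu]
  have hm_le : m ≤ (h - u x₀) ^ (Fintype.card ι + 2) * D[v] u x₀ := by
    refine le_of_mul_le_mul_right ?_ hξ₀
    rw [← heq, mul_assoc, mul_comm (D[v] u x₀)]
    exact mul_le_mul_of_nonneg_left (he.dirDeriv_sq_le hu u ξ₀) (by positivity)
  have hP_nonneg : 0 ≤ D[v] u x₀ := by
    rw [hv, dirDeriv_frameGrad]
    exact Finset.sum_nonneg fun j _ => mul_self_nonneg _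
  rcases hP_nonneg.eq_or_lt with hP | hP
  · rw [← hP, mul_zero] at hm_le
    exact hm_le.trans (by positivity)
  have hm_eq : m = (h - u x₀) ^ (Fintype.card ι + 2) * D[v] u x₀ := by
    refine le_antisymm hm_le (le_of_mul_le_mul_right ?_ hP)
    have hcontact := hmax.self_of_nhds v
    rw [hvv] at hcontact
    linarith
  rw [hm_eq] at hmax ⊢
  rw [pow_succ _ (Fintype.card ι + 2), mul_assoc]
  exact mul_le_mul_of_nonneg_left (he.dirDeriv_frameGrad_self_le hu hs hv hP hmax) (by positivity)

end IsHessianFrame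

end PointwiseEstimates

/-! ### The third derivative estimate at a maximum point -/

theorem HasTwoJetAt.sq_mul_sq_sub_of_isLocalMax {S T H : ℝ → ℝ} {s s₁ s₂ κ τ₁ τ₂ η₁ η₂ t₀ : ℝ}
    (hS : HasTwoJetAt S s s₁ s₂ t₀) (hT : HasTwoJetAt T κ τ₁ τ₂ t₀)
    (hH : HasTwoJetAt H 1 η₁ η₂ t₀) (hs : 0 < s) (hκ : 0 < κ)
    (hmax : IsLocalMax (fun t => S t ^ 2 * T t ^ 2 - s ^ 2 * κ ^ 2 * H t ^ 3) t₀) :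
    2 * κ * s₁ + 2 * s * τ₁ = 3 * s * κ * η₁ ∧
      -(4 * κ * s₁ ^ 2) + 2 * s * s₂ * κ + 6 * s * s₁ * κ * η₁ - 3 / 2 * s ^ 2 * κ * η₁ ^ 2
        + 2 * s ^ 2 * τ₂ - 3 * s ^ 2 * κ * η₂ ≤ 0 := by
  obtain ⟨hfirst, hsecond⟩ :=
    (((hS.pow 2).mul (hT.pow 2)).sub ((hH.pow 3).const_mul _)).of_isLocalMax hmax
  norm_num at hfirst hsecond
  have hτ : 2 * κ * s₁ + 2 * s * τ₁ = 3 * s * κ * η₁ := by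
    have hne : s * κ ≠ 0 := by positivity
    exact mul_left_cancel₀ hne (by linear_combination hfirst)
  refine ⟨hτ, nonpos_of_mul_nonpos_right (a := κ) ?_ hκ⟩
  linear_combination hsecond - (s * τ₁ + 3 * κ * s₁ + 3 / 2 * s * κ * η₁) * hτ

section ThirdDerivative

variable {E : Type*} [NormedAddCommGroup E] [NormedSpace ℝ E] {u : E → ℝ} {x₀ v : E} {h κ : ℝ}

/-- The function `(h - u x)² (D_ξ³ u x)² / (D_ξ² u x)³` attains a local maximum at `x = x₀`,
`ξ = v`, where `v` is normalised by `D_v² u x₀ = 1` and `κ = D_v³ u x₀` is positive. -/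
structure IsThirdDerivMax (u : E → ℝ) (h κ : ℝ) (x₀ v : E) : Prop where
  height_pos : 0 < h - u x₀
  second_eq_one : D[v] (D[v] u) x₀ = 1
  third_eq : D[v] (D[v] (D[v] u)) x₀ = κ
  third_pos : 0 < κ
  eventually_le : ∀ᶠ x in 𝓝 x₀, ∀ ξ, (h - u x) ^ 2 * D[ξ] (D[ξ] (D[ξ] u)) x ^ 2
    ≤ (h - u x₀) ^ 2 * κ ^ 2 * D[ξ] (D[ξ] u) x ^ 3

namespace IsThirdDerivMax

theorem isLocalMax_line (hm : IsThirdDerivMax u h κ x₀ v) (d b : E) :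
    IsLocalMax (fun t : ℝ => (h - u (x₀ + t • d)) ^ 2
      * D[v + t • b] (D[v + t • b] (D[v + t • b] u)) (x₀ + t • d) ^ 2
      - (h - u x₀) ^ 2 * κ ^ 2 * D[v + t • b] (D[v + t • b] u) (x₀ + t • d) ^ 3) 0 :=
  isLocalMax_sub_comp_line hm.eventually_le
    (by rw [hm.second_eq_one, hm.third_eq, one_pow, mul_one]) d b

theorem direction_variation (hm : IsThirdDerivMax u h κ x₀ v) (hu : ContDiff ℝ ∞ u) (w : E) :
    D[w] (D[v] (D[v] u)) x₀ = κ * D[w] (D[v] u) x₀ ∧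
      2 * D[w] (D[w] (D[v] u)) x₀ ≤ κ * (D[w] (D[w] u) x₀ + D[w] (D[v] u) x₀ ^ 2) := by
  have hS := (hasTwoJetAt_comp_line hu x₀ 0).const_sub h
  have hT := hasTwoJetAt_iterate_dirDeriv hu x₀ 0 v w 3
  have hH := hasTwoJetAt_iterate_dirDeriv hu x₀ 0 v w 2
  norm_num [zero_dirDeriv, hm.second_eq_one, hm.third_eq] at hS hT hH
  have hlocal := hm.isLocalMax_line 0 w
  simp only [smul_zero, add_zero] at hlocal
  obtain ⟨hfirst, hsecond⟩ :=
    hS.sq_mul_sq_sub_of_isLocalMax hT hH hm.height_pos hm.third_pos hlocal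
  have hs := hm.height_pos
  set s := h - u x₀
  constructor
  · exact mul_left_cancel₀ hs.ne' (by linear_combination hfirst / 6)
  · exact le_of_mul_le_mul_left (by linear_combination hsecond / 6) (sq_pos_of_pos hs)

end IsThirdDerivMax

variable {ι : Type*} [Fintype ι] [DecidableEq ι] {e : Module.Basis ι ℝ E}

namespace IsHessianFrame

theorem sq_dirDeriv_dirDeriv_le (he : IsHessianFrame u x₀ e) (hu : ContDiff ℝ ∞ u) (v w : E) :
    D[w] (D[v] u) x₀ ^ 2 ≤ D[w] (D[w] u) x₀ * D[v] (D[v] u) x₀ := by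
  have hcauchy := he.dirDeriv_sq_le hu (D[v] u) w
  rwa [dirDeriv_comm hu (frameGrad e _ x₀) v, he.dirDeriv_dirDeriv_frameGrad hu] at hcauchy

theorem sum_sq_dirDeriv_dirDeriv (he : IsHessianFrame u x₀ e) (hu : ContDiff ℝ ∞ u) (v : E) :
    ∑ i, D[e i] (D[v] u) x₀ ^ 2 = D[v] (D[v] u) x₀ := by
  rw [he.dirDeriv_eq_sum (D[v] u) v]
  simp only [dirDeriv_comm hu v, sq]

/-- The direction `v` is varied by `-½ grad (D_i D_v u)` because this makes the first derivative of
`D_ξ D_ξ u` vanish. -/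
theorem hasTwoJetAt_third_variation (he : IsHessianFrame u x₀ e) (hu : ContDiff ℝ ∞ u) {b : E}
    {i : ι} (hb : b = (-1 / 2 : ℝ) • frameGrad e (D[e i] (D[v] u)) x₀) :
    HasTwoJetAt (fun t : ℝ => D[v + t • b] (D[v + t • b] u) (x₀ + t • e i)) (D[v] (D[v] u) x₀) 0
      (D[e i] (D[e i] (D[v] (D[v] u))) x₀
        - 3 / 2 * D[frameGrad e (D[e i] (D[v] u)) x₀] (D[e i] (D[v] u)) x₀) 0 ∧
    ∃ τ₁, HasTwoJetAt (fun t : ℝ => D[v + t • b] (D[v + t • b] (D[v + t • b] u)) (x₀ + t • e i))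
      (D[v] (D[v] (D[v] u)) x₀) τ₁
      (D[e i] (D[e i] (D[v] (D[v] (D[v] u)))) x₀
        - 3 * D[frameGrad e (D[e i] (D[v] u)) x₀] (D[e i] (D[v] (D[v] u))) x₀
        + 3 / 2 * D[frameGrad e (D[e i] (D[v] u)) x₀]
          (D[frameGrad e (D[e i] (D[v] u)) x₀] (D[v] u)) x₀) 0 := by
  set f := D[e i] (D[v] u) with hf
  set g := frameGrad e f x₀ with hg
  have hvu := contDiff_dirDeriv hu v
  have hvvu := contDiff_dirDeriv hvu v
  have hgvu : D[g] (D[v] u) x₀ = D[e i] (D[v] (D[v] u)) x₀ := by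
    rw [dirDeriv_comm hu, hg, he.dirDeriv_dirDeriv_frameGrad hu, hf, dirDeriv_comm hvu]
  have hggu : D[g] (D[g] u) x₀ = D[g] f x₀ := by
    conv_lhs => rw [hg, he.dirDeriv_dirDeriv_frameGrad hu]
  have hH := hasTwoJetAt_iterate_dirDeriv hu x₀ (e i) v b 2
  have hT := hasTwoJetAt_iterate_dirDeriv hu x₀ (e i) v b 3
  have hbF : ∀ F, D[b] F = (-1 / 2 : ℝ) • D[g] F := fun F => by rw [hb, smul_dirDeriv]
  have hbbF : ∀ F, D[b] (D[b] F) x₀ = 1 / 4 * D[g] (D[g] F) x₀ := fun F => by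
    rw [hbF, hbF, dirDeriv_const_smul]
    simp only [Pi.smul_apply, smul_eq_mul]
    ring
  norm_num at hH hT
  refine ⟨?_, D[e i] (D[v] (D[v] (D[v] u))) x₀ + 3 * D[b] (D[v] (D[v] u)) x₀, ?_⟩
  · convert hH using 1
    · rw [hbF, Pi.smul_apply, hgvu, smul_eq_mul]
      ring
    · rw [dirDeriv_comm hvu (e i) b, hbF, Pi.smul_apply, hbbF, hggu, smul_eq_mul]
      ring
  · convert hT using 1
    rw [dirDeriv_comm hvvu (e i) b, hbF (D[e i] _), Pi.smul_apply, hbbF, smul_eq_mul]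
    ring

end IsHessianFrame

namespace IsThirdDerivMax

theorem dirDeriv_dirDeriv_le (hm : IsThirdDerivMax u h κ x₀ v) (he : IsHessianFrame u x₀ e)
    (hu : ContDiff ℝ ∞ u) (w : E) : D[w] (D[w] (D[v] u)) x₀ ≤ κ * D[w] (D[w] u) x₀ := by
  have hcauchy := he.sq_dirDeriv_dirDeriv_le hu v w
  rw [hm.second_eq_one, mul_one] at hcauchy
  linarith [(hm.direction_variation hu w).2, mul_le_mul_of_nonneg_left hcauchy hm.third_pos.le]

theorem sq_le_sum (hm : IsThirdDerivMax u h κ x₀ v) (he : IsHessianFrame u x₀ e)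
    (hu : ContDiff ℝ ∞ u) :
    κ ^ 2 ≤ ∑ i, D[frameGrad e (D[e i] (D[v] u)) x₀] (D[e i] (D[v] u)) x₀ := calc
  κ ^ 2 = ∑ i, (κ * D[e i] (D[v] u) x₀) ^ 2 := by
    simp only [mul_pow, ← Finset.mul_sum, he.sum_sq_dirDeriv_dirDeriv hu, hm.second_eq_one, mul_one]
  _ ≤ _ := Finset.sum_le_sum fun i _ => by
    have hcauchy := he.dirDeriv_sq_le hu (D[e i] (D[v] u)) v
    rwa [dirDeriv_comm (contDiff_dirDeriv hu v), (hm.direction_variation hu (e i)).1,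
      hm.second_eq_one, one_mul] at hcauchy

theorem point_variation (hm : IsThirdDerivMax u h κ x₀ v) (he : IsHessianFrame u x₀ e)
    (hu : ContDiff ℝ ∞ u) (i : ι) :
    -(4 * κ * D[e i] u x₀ ^ 2) - 2 * (h - u x₀) * κ + 2 * (h - u x₀) ^ 2
      * (D[e i] (D[e i] (D[v] (D[v] (D[v] u)))) x₀
        - 3 * D[frameGrad e (D[e i] (D[v] u)) x₀] (D[e i] (D[v] (D[v] u))) x₀
        + 3 / 2 * D[frameGrad e (D[e i] (D[v] u)) x₀]
          (D[frameGrad e (D[e i] (D[v] u)) x₀] (D[v] u)) x₀)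
      - 3 * (h - u x₀) ^ 2 * κ * (D[e i] (D[e i] (D[v] (D[v] u))) x₀
        - 3 / 2 * D[frameGrad e (D[e i] (D[v] u)) x₀] (D[e i] (D[v] u)) x₀) ≤ 0 := by
  obtain ⟨hH, τ₁, hT⟩ := he.hasTwoJetAt_third_variation hu (v := v) (i := i) rfl
  rw [hm.second_eq_one] at hH
  rw [hm.third_eq] at hT
  obtain ⟨-, hsecond⟩ := ((hasTwoJetAt_comp_line hu x₀ (e i)).const_sub h
    ).sq_mul_sq_sub_of_isLocalMax hT hH hm.height_pos hm.third_pos (hm.isLocalMax_line _ _)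
  rw [he.dirDeriv_dirDeriv_self] at hsecond
  linear_combination hsecond

theorem sq_mul_sq_le (hm : IsThirdDerivMax u h κ x₀ v) (he : IsHessianFrame u x₀ e)
    (hu : ContDiff ℝ ∞ u) :
    (h - u x₀) ^ 2 * κ ^ 2
      ≤ 8 * D[frameGrad e u x₀] u x₀ + 4 * Fintype.card ι * (h - u x₀) := by
  set N := ∑ i, D[frameGrad e (D[e i] (D[v] u)) x₀] (D[e i] (D[v] u)) x₀ with hN
  set R := ∑ i, D[frameGrad e (D[e i] (D[v] u)) x₀]
    (D[frameGrad e (D[e i] (D[v] u)) x₀] (D[v] u)) x₀ with hR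
  have hRN : R ≤ κ * N := by
    rw [hR, hN, Finset.mul_sum]
    refine Finset.sum_le_sum fun i _ => (hm.dirDeriv_dirDeriv_le he hu _).trans_eq ?_
    rw [he.dirDeriv_dirDeriv_frameGrad hu]
  have hlaplacian : κ * (-(4 * D[frameGrad e u x₀] u x₀) - 2 * Fintype.card ι * (h - u x₀))
      - (h - u x₀) ^ 2 * R + 3 / 2 * (h - u x₀) ^ 2 * κ * N ≤ 0 := by
    have hsum := Finset.sum_nonpos fun i (_ : i ∈ Finset.univ) => hm.point_variation he hu i
    have hthird := he.sum_laplacian_dirDeriv_dirDeriv_dirDeriv hu v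
    simp only [Finset.sum_add_distrib, Finset.sum_sub_distrib, Finset.sum_neg_distrib,
      ← Finset.mul_sum, he.sum_laplacian_dirDeriv_dirDeriv hu, sq (D[_] u x₀),
      ← dirDeriv_frameGrad, Finset.sum_const, Finset.card_univ, nsmul_eq_mul, ← hN, ← hR]
      at hsum hthird
    linear_combination hsum - 2 * (h - u x₀) ^ 2 * hthird
  have hN_le : (h - u x₀) ^ 2 * N
      ≤ 8 * D[frameGrad e u x₀] u x₀ + 4 * Fintype.card ι * (h - u x₀) := by
    refine le_of_mul_le_mul_left ?_ hm.third_pos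
    linarith [mul_le_mul_of_nonneg_left hRN (sq_nonneg (h - u x₀))]
  exact (mul_le_mul_of_nonneg_left (hm.sq_le_sum he hu) (sq_nonneg _)).trans hN_le

end IsThirdDerivMax

theorem exists_smul_third_nonneg {ξ₀ : E} (hξ₀ : 0 < D[ξ₀] (D[ξ₀] u) x₀) :
    ∃ r : ℝ, D[r • ξ₀] (D[r • ξ₀] u) x₀ = 1 ∧ 0 ≤ D[r • ξ₀] (D[r • ξ₀] (D[r • ξ₀] u)) x₀ := by
  set q := (√(D[ξ₀] (D[ξ₀] u) x₀))⁻¹ with hq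
  have : 0 < q := by positivity
  have hq_sq : q ^ 2 * D[ξ₀] (D[ξ₀] u) x₀ = 1 := by
    rw [hq, inv_pow, sq_sqrt hξ₀.le, inv_mul_cancel₀ hξ₀.ne']
  have hsecond : ∀ r : ℝ, D[r • ξ₀] (D[r • ξ₀] u) x₀ = r ^ 2 * D[ξ₀] (D[ξ₀] u) x₀ := fun r =>
    congrFun (iterate_smul_dirDeriv r ξ₀ 2) x₀
  have hthird : ∀ r : ℝ, D[r • ξ₀] (D[r • ξ₀] (D[r • ξ₀] u)) x₀
      = r ^ 3 * D[ξ₀] (D[ξ₀] (D[ξ₀] u)) x₀ := fun r => congrFun (iterate_smul_dirDeriv r ξ₀ 3) x₀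
  simp only [hsecond, hthird]
  rcases le_total 0 (D[ξ₀] (D[ξ₀] (D[ξ₀] u)) x₀) with hsign | hsign
  · exact ⟨q, hq_sq, by positivity⟩
  · exact ⟨-q, by rwa [neg_sq], by
      rw [Odd.neg_pow (by decide), neg_mul, ← mul_neg]
      exact mul_nonneg (by positivity) (neg_nonneg.2 hsign)⟩

theorem IsHessianFrame.third_maximum_le (he : IsHessianFrame u x₀ e) (hu : ContDiff ℝ ∞ u)
    (hs : 0 < h - u x₀) {B : ℝ} (hB : 0 ≤ B) (hgrad : ∀ ξ, D[ξ] u x₀ ^ 2 ≤ B * D[ξ] (D[ξ] u) x₀)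
    {ξ₀ : E} (hξ₀ : 0 < D[ξ₀] (D[ξ₀] u) x₀) {m : ℝ}
    (hmax : ∀ᶠ x in 𝓝 x₀, ∀ ξ, (h - u x) ^ 2 * D[ξ] (D[ξ] (D[ξ] u)) x ^ 2
      ≤ m * D[ξ] (D[ξ] u) x ^ 3)
    (heq : (h - u x₀) ^ 2 * D[ξ₀] (D[ξ₀] (D[ξ₀] u)) x₀ ^ 2 = m * D[ξ₀] (D[ξ₀] u) x₀ ^ 3) :
    m ≤ 8 * B + 4 * Fintype.card ι * (h - u x₀) := by
  obtain ⟨r, hsecond, hthird⟩ := exists_smul_third_nonneg hξ₀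
  set v := r • ξ₀
  have hm : m = (h - u x₀) ^ 2 * D[v] (D[v] (D[v] u)) x₀ ^ 2 := by
    have hthird_smul : D[v] (D[v] (D[v] u)) x₀ = r ^ 3 * D[ξ₀] (D[ξ₀] (D[ξ₀] u)) x₀ :=
      congrFun (iterate_smul_dirDeriv r ξ₀ 3) x₀
    have hsecond_smul : D[v] (D[v] u) x₀ = r ^ 2 * D[ξ₀] (D[ξ₀] u) x₀ :=
      congrFun (iterate_smul_dirDeriv r ξ₀ 2) x₀
    rw [hthird_smul]
    calc m = m * (r ^ 2 * D[ξ₀] (D[ξ₀] u) x₀) ^ 3 := by rw [← hsecond_smul, hsecond]; ring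
      _ = r ^ 6 * (m * D[ξ₀] (D[ξ₀] u) x₀ ^ 3) := by ring
      _ = (h - u x₀) ^ 2 * (r ^ 3 * D[ξ₀] (D[ξ₀] (D[ξ₀] u)) x₀) ^ 2 := by rw [← heq]; ring
  subst hm
  rcases hthird.eq_or_lt with hzero | hpos
  · rw [← hzero, zero_pow two_ne_zero, mul_zero]
    positivity
  have hP : D[frameGrad e u x₀] u x₀ ≤ B := by
    have hg := hgrad (frameGrad e u x₀)
    rw [he.dirDeriv_dirDeriv_frameGrad hu, sq] at hg
    by_contra! hlt
    exact (mul_lt_mul_of_pos_right hlt (hB.trans_lt hlt)).not_ge hg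
  have hmaximum : IsThirdDerivMax u h (D[v] (D[v] (D[v] u)) x₀) x₀ v :=
    ⟨hs, hsecond, rfl, hpos, hmax⟩
  linarith [hmaximum.sq_mul_sq_le he hu]

end ThirdDerivative

/-! ### Maximum principle on compact sublevel sets -/

section MaximumPrinciple

variable {E : Type*} [NormedAddCommGroup E] [NormedSpace ℝ E] [ProperSpace E]

theorem le_mul_of_forall_maximum_le {X : Type*} [TopologicalSpace X] {K : Set X} (hK : IsCompact K)
    {F G : X → E → ℝ} (hF : Continuous fun p : X × E => F p.1 p.2)
    (hG : Continuous fun p : X × E => G p.1 p.2) (hG_pos : ∀ x ξ, ξ ≠ 0 → 0 < G x ξ)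
    {q : ℕ} (hq : q ≠ 0) (hF_smul : ∀ x (r : ℝ) ξ, F x (r • ξ) = r ^ q * F x ξ)
    (hG_smul : ∀ x (r : ℝ) ξ, G x (r • ξ) = r ^ q * G x ξ) {B : ℝ}
    (hB : ∀ x₀ ∈ K, ∀ ξ₀ ≠ 0, ∀ m, (∀ x ∈ K, ∀ ξ, F x ξ ≤ m * G x ξ) →
      F x₀ ξ₀ = m * G x₀ ξ₀ → m ≤ B) {x : X} (hx : x ∈ K) (ξ : E) :
    F x ξ ≤ B * G x ξ := by
  have hzero : ∀ y, F y 0 = 0 ∧ G y 0 = 0 := fun y =>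
    ⟨by simpa [hq] using hF_smul y 0 0, by simpa [hq] using hG_smul y 0 0⟩
  obtain rfl | hξ := eq_or_ne ξ 0
  · rw [(hzero x).1, (hzero x).2, mul_zero]
  have hne : ∀ η ∈ Metric.sphere (0 : E) 1, η ≠ 0 := fun η hη =>
    ne_zero_of_mem_unit_sphere ⟨η, hη⟩
  have hunit : ∀ η : E, η ≠ 0 → ‖η‖⁻¹ • η ∈ Metric.sphere (0 : E) 1 := fun η hη => by
    simp [norm_smul, norm_ne_zero_iff.2 hη]
  obtain ⟨⟨x₀, ξ₀⟩, ⟨hx₀, hξ₀⟩, hmax⟩ := (hK.prod (isCompact_sphere (0 : E) 1)).exists_isMaxOn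
    ⟨(x, ‖ξ‖⁻¹ • ξ), hx, hunit ξ hξ⟩ (f := fun p => F p.1 p.2 / G p.1 p.2)
    (hF.continuousOn.div hG.continuousOn fun p hp => (hG_pos _ _ (hne _ hp.2)).ne')
  have hle : ∀ y ∈ K, ∀ η, F y η ≤ F x₀ ξ₀ / G x₀ ξ₀ * G y η := fun y hy η => by
    obtain rfl | hη := eq_or_ne η 0
    · rw [(hzero y).1, (hzero y).2, mul_zero]
    have hratio : F y (‖η‖⁻¹ • η) / G y (‖η‖⁻¹ • η) ≤ F x₀ ξ₀ / G x₀ ξ₀ :=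
      hmax (show (y, ‖η‖⁻¹ • η) ∈ K ×ˢ Metric.sphere 0 1 from ⟨hy, hunit η hη⟩)
    have hscale : ‖η‖⁻¹ ^ q ≠ 0 := pow_ne_zero _ (inv_ne_zero (norm_ne_zero_iff.2 hη))
    rwa [hF_smul, hG_smul, mul_div_mul_left _ _ hscale, div_le_iff₀ (hG_pos y η hη)] at hratio
  have hm := hB x₀ hx₀ ξ₀ (hne ξ₀ hξ₀) _ hle (div_mul_cancel₀ _ (hG_pos _ _ (hne ξ₀ hξ₀)).ne').symm
  exact (hle x hx ξ).trans (mul_le_mul_of_nonneg_right hm (hG_pos x ξ hξ).le)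

theorem pow_sub_mul_le_of_forall_interior_maximum_le {X : Type*} [TopologicalSpace X]
    {u : X → ℝ} (hu : Continuous u) {h : ℝ} (hK : IsCompact {x | u x ≤ h}) {F G : X → E → ℝ}
    (hF : Continuous fun p : X × E => F p.1 p.2) (hG : Continuous fun p : X × E => G p.1 p.2)
    (hG_pos : ∀ x ξ, ξ ≠ 0 → 0 < G x ξ) {q : ℕ} (hq : q ≠ 0)
    (hF_smul : ∀ x (r : ℝ) ξ, F x (r • ξ) = r ^ q * F x ξ)
    (hG_smul : ∀ x (r : ℝ) ξ, G x (r • ξ) = r ^ q * G x ξ) {j : ℕ} (hj : j ≠ 0) {B : ℝ} (hB : 0 ≤ B)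
    (hmax : ∀ x₀, u x₀ < h → ∀ ξ₀ ≠ 0, ∀ m,
      (∀ᶠ x in 𝓝 x₀, ∀ ξ, (h - u x) ^ j * F x ξ ≤ m * G x ξ) →
      (h - u x₀) ^ j * F x₀ ξ₀ = m * G x₀ ξ₀ → m ≤ B) {x : X} (hx : u x ≤ h) (ξ : E) :
    (h - u x) ^ j * F x ξ ≤ B * G x ξ := by
  refine le_mul_of_forall_maximum_le hK (F := fun x ξ => (h - u x) ^ j * F x ξ) (by fun_prop) hG
    hG_pos hq (fun x r ξ => by rw [hF_smul]; ring) hG_smul ?_ hx ξ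
  intro x₀ hx₀ ξ₀ hξ₀ m hle heq
  rcases lt_or_eq_of_le (show u x₀ ≤ h from hx₀) with hlt | hboundary
  · exact hmax x₀ hlt ξ₀ hξ₀ m
      ((hu.continuousAt.eventually_lt continuousAt_const hlt).mono fun y hy => hle y hy.le) heq
  · rw [hboundary, sub_self, zero_pow hj, zero_mul, eq_comm, mul_eq_zero,
      or_iff_left (hG_pos x₀ ξ₀ hξ₀).ne'] at heq
    exact heq.trans_le hB

theorem isCompact_sublevel_of_convexOn {f : E → ℝ} (hf : Continuous f)
    (hconv : ConvexOn ℝ Set.univ f) {z : E} (hmin : ∀ x ≠ z, f z < f x) (h : ℝ) :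
    IsCompact {x | f x ≤ h} := by
  obtain ⟨μ, hμ, hsphere⟩ : ∃ μ > 0, ∀ x ∈ Metric.sphere z 1, f z + μ ≤ f x := by
    rcases (Metric.sphere z 1).eq_empty_or_nonempty with hempty | hne
    · exact ⟨1, one_pos, by simp [hempty]⟩
    · obtain ⟨y, hy, hy_min⟩ := (isCompact_sphere z 1).exists_isMinOn hne hf.continuousOn
      exact ⟨f y - f z, sub_pos.2 (hmin y (Metric.ne_of_mem_sphere hy one_ne_zero)),
        fun x hx => by linarith [isMinOn_iff.1 hy_min x hx]⟩
  refine (isCompact_closedBall z (max 1 ((h - f z) / μ))).of_isClosed_subset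
    (isClosed_le hf continuous_const) fun x hx => ?_
  rw [Metric.mem_closedBall, dist_eq_norm, le_max_iff]
  refine or_iff_not_imp_left.2 fun hfar => ?_
  push Not at hfar
  have hr : 0 < ‖x - z‖ := one_pos.trans hfar
  have hray : f (z + ‖x - z‖⁻¹ • (x - z)) ≤ (1 - ‖x - z‖⁻¹) * f z + ‖x - z‖⁻¹ * f x := by
    rw [show z + ‖x - z‖⁻¹ • (x - z) = (1 - ‖x - z‖⁻¹) • z + ‖x - z‖⁻¹ • x by module]
    exact hconv.2 (Set.mem_univ z) (Set.mem_univ x)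
      (sub_nonneg.2 (inv_le_one_of_one_le₀ hfar.le)) (inv_nonneg.2 hr.le) (by ring)
  have hunit := hsphere (z + ‖x - z‖⁻¹ • (x - z)) (by simp [norm_smul, hr.ne'])
  have hx' : f x ≤ h := hx
  rw [le_div_iff₀ hμ]
  calc ‖x - z‖ * μ ≤ ‖x - z‖ * (‖x - z‖⁻¹ * (f x - f z)) := by gcongr; linarith
    _ = f x - f z := mul_inv_cancel_left₀ hr.ne' _
    _ ≤ h - f z := by gcongr

end MaximumPrinciple

section StrictMinimum

variable {E : Type*} [NormedAddCommGroup E] [NormedSpace ℝ E] {u : E → ℝ}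

theorem lt_of_dirDeriv_eq_zero (hu : ContDiff ℝ ∞ u)
    (hpos : ∀ v ≠ 0, ∀ x, 0 < D[v] (D[v] u) x) {z : E} (hz : ∀ v, D[v] u z = 0) {x : E}
    (hx : x ≠ z) : u z < u x := by
  set v := x - z with hv
  have hslope : StrictMono fun t : ℝ => D[v] u (z + t • v) := strictMono_of_deriv_pos fun t => by
    rw [(hasDerivAt_comp_line (contDiff_dirDeriv hu v) z v t).deriv]
    exact hpos v (sub_ne_zero.2 hx) _
  have hvalue : StrictMonoOn (fun t : ℝ => u (z + t • v)) (Set.Ici 0) := by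
    have hcont := hu.continuous
    refine strictMonoOn_of_deriv_pos (convex_Ici 0) (by fun_prop) fun t ht => ?_
    rw [interior_Ici] at ht
    rw [(hasDerivAt_comp_line hu z v t).deriv]
    simpa [hz] using hslope (Set.mem_Ioi.1 ht)
  simpa [hv] using hvalue Set.self_mem_Ici (Set.mem_Ici.2 zero_le_one) zero_lt_one

end StrictMinimum

/-! ### Interior estimates and vanishing of the third derivatives -/

section Estimates

variable {E : Type*} [NormedAddCommGroup E] [NormedSpace ℝ E] {ι : Type*} [Fintype ι]
  [DecidableEq ι] {b : Module.Basis ι ℝ E} {c : ℝ} {u : E → ℝ}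

namespace IsMongeAmpereSolution

theorem pow_mul_sq_dirDeriv_le (hu : IsMongeAmpereSolution b c u) (hnonneg : ∀ x, 0 ≤ u x) {h : ℝ}
    (hcompact : IsCompact {x | u x ≤ h}) {x : E} (hx : u x ≤ h) (ξ : E) :
    (h - u x) ^ (Fintype.card ι + 2) * D[ξ] u x ^ 2
      ≤ h ^ (Fintype.card ι + 3) * (Fintype.card ι * (Fintype.card ι + 3)) * D[ξ] (D[ξ] u) x := by
  have := Module.Finite.of_basis b
  have := FiniteDimensional.proper_real E
  have hh : 0 ≤ h := (hnonneg x).trans hx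
  refine pow_sub_mul_le_of_forall_interior_maximum_le hu.contDiff.continuous hcompact
    (F := fun x ξ => D[ξ] u x ^ 2) (G := fun x ξ => D[ξ] (D[ξ] u) x)
    ((continuous_uncurry_iterate_dirDeriv hu.contDiff 1).pow 2)
    (continuous_uncurry_iterate_dirDeriv hu.contDiff 2)
    (fun x ξ hξ => hu.dirDeriv_dirDeriv_pos hξ x) two_ne_zero
    (fun x r ξ => by rw [smul_dirDeriv, Pi.smul_apply, smul_eq_mul, mul_pow])
    (fun x r ξ => congrFun (iterate_smul_dirDeriv r ξ 2) x) (by positivity) (by positivity) ?_ hx ξ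
  intro x₀ hx₀ ξ₀ hξ₀ m hle heq
  obtain ⟨e, he⟩ := hu.exists_isHessianFrame x₀
  refine (he.gradient_maximum_le hu.contDiff (sub_pos.2 hx₀) (hu.dirDeriv_dirDeriv_pos hξ₀ x₀)
    hle heq).trans ?_
  gcongr
  exact sub_le_self h (hnonneg x₀)

theorem sq_dirDeriv_le (hu : IsMongeAmpereSolution b c u) (hnonneg : ∀ x, 0 ≤ u x) {h : ℝ}
    (hh : 0 < h) (hcompact : IsCompact {x | u x ≤ 2 * h}) {x : E} (hx : u x ≤ h) (ξ : E) :
    D[ξ] u x ^ 2 ≤ 2 ^ (Fintype.card ι + 3) * (Fintype.card ι * (Fintype.card ι + 3)) * h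
      * D[ξ] (D[ξ] u) x := by
  refine le_of_mul_le_mul_left ?_ (pow_pos hh (Fintype.card ι + 2))
  calc h ^ (Fintype.card ι + 2) * D[ξ] u x ^ 2
      ≤ (2 * h - u x) ^ (Fintype.card ι + 2) * D[ξ] u x ^ 2 := by
        gcongr
        linarith
    _ ≤ (2 * h) ^ (Fintype.card ι + 3) * (Fintype.card ι * (Fintype.card ι + 3))
        * D[ξ] (D[ξ] u) x := hu.pow_mul_sq_dirDeriv_le hnonneg hcompact (by linarith) ξ
    _ = _ := by ring

theorem sq_mul_sq_third_le (hu : IsMongeAmpereSolution b c u) (hnonneg : ∀ x, 0 ≤ u x)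
    {h A : ℝ} (hA : 0 ≤ A) (hcompact : IsCompact {x | u x ≤ h})
    (hgrad : ∀ x, u x ≤ h → ∀ ξ, D[ξ] u x ^ 2 ≤ A * h * D[ξ] (D[ξ] u) x)
    {x : E} (hx : u x ≤ h) (ξ : E) :
    (h - u x) ^ 2 * D[ξ] (D[ξ] (D[ξ] u)) x ^ 2
      ≤ (8 * A + 4 * Fintype.card ι) * h * D[ξ] (D[ξ] u) x ^ 3 := by
  have := Module.Finite.of_basis b
  have := FiniteDimensional.proper_real E
  have hh : 0 ≤ h := (hnonneg x).trans hx
  refine pow_sub_mul_le_of_forall_interior_maximum_le hu.contDiff.continuous hcompact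
    (F := fun x ξ => D[ξ] (D[ξ] (D[ξ] u)) x ^ 2) (G := fun x ξ => D[ξ] (D[ξ] u) x ^ 3) (q := 6)
    ((continuous_uncurry_iterate_dirDeriv hu.contDiff 3).pow 2)
    ((continuous_uncurry_iterate_dirDeriv hu.contDiff 2).pow 3)
    (fun x ξ hξ => pow_pos (hu.dirDeriv_dirDeriv_pos hξ x) 3) (by norm_num)
    (fun x r ξ => ?_) (fun x r ξ => ?_) two_ne_zero (by positivity) ?_ hx ξ
  · rw [show D[r • ξ] (D[r • ξ] (D[r • ξ] u)) x = r ^ 3 * D[ξ] (D[ξ] (D[ξ] u)) x from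
      congrFun (iterate_smul_dirDeriv r ξ 3) x]
    ring
  · rw [show D[r • ξ] (D[r • ξ] u) x = r ^ 2 * D[ξ] (D[ξ] u) x from
      congrFun (iterate_smul_dirDeriv r ξ 2) x]
    ring
  intro x₀ hx₀ ξ₀ hξ₀ m hle heq
  obtain ⟨e, he⟩ := hu.exists_isHessianFrame x₀
  have hm := he.third_maximum_le hu.contDiff (sub_pos.2 hx₀) (by positivity) (hgrad x₀ hx₀.le)
    (hu.dirDeriv_dirDeriv_pos hξ₀ x₀) hle heq
  have hheight : 4 * Fintype.card ι * (h - u x₀) ≤ 4 * Fintype.card ι * h := by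
    gcongr
    exact sub_le_self h (hnonneg x₀)
  linarith

theorem third_eq_zero_of_critical (hu : IsMongeAmpereSolution b c u) {z : E} (hz : u z = 0)
    (hcritical : ∀ v, D[v] u z = 0) (ξ : E) : D[ξ] (D[ξ] (D[ξ] u)) z = 0 := by
  have := Module.Finite.of_basis b
  have := FiniteDimensional.proper_real E
  have hmin : ∀ x ≠ z, u z < u x := fun x => lt_of_dirDeriv_eq_zero hu.contDiff
    (fun v hv => hu.dirDeriv_dirDeriv_pos hv) hcritical
  have hnonneg : ∀ x, 0 ≤ u x := fun x => by
    obtain rfl | hx := eq_or_ne x z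
    · exact hz.ge
    · exact hz.symm.trans_le (hmin x hx).le
  have hcompact := isCompact_sublevel_of_convexOn hu.contDiff.continuous hu.convexOn hmin
  set A : ℝ := 2 ^ (Fintype.card ι + 3) * (Fintype.card ι * (Fintype.card ι + 3))
  have hbound : ∀ h > 0, h * D[ξ] (D[ξ] (D[ξ] u)) z ^ 2
      ≤ (8 * A + 4 * Fintype.card ι) * D[ξ] (D[ξ] u) z ^ 3 := fun h hh => by
    have hthird := hu.sq_mul_sq_third_le hnonneg (by positivity) (hcompact h)
      (fun x hx => hu.sq_dirDeriv_le hnonneg hh (hcompact (2 * h)) hx) (hz.trans_le hh.le) ξ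
    rw [hz, sub_zero] at hthird
    exact le_of_mul_le_mul_left (by linear_combination hthird) hh
  by_contra hne
  have hunbounded := Filter.tendsto_id.atTop_mul_const (sq_pos_of_ne_zero hne)
  obtain ⟨h, hlt, hh⟩ :=
    ((hunbounded.eventually_gt_atTop _).and (Filter.eventually_gt_atTop 0)).exists
  exact (hbound h hh).not_gt hlt

end IsMongeAmpereSolution

/-- The height of the graph of `u` above its tangent plane at `z`. -/
noncomputable def tangentGap (u : E → ℝ) (z : E) : E → ℝ :=
  fun x => u x - (fderiv ℝ u z x + (u z - fderiv ℝ u z z))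

theorem tangentGap_self (u : E → ℝ) (z : E) : tangentGap u z z = 0 := by
  simp [tangentGap]

theorem contDiff_tangentGap (hu : ContDiff ℝ ∞ u) (z : E) : ContDiff ℝ ∞ (tangentGap u z) :=
  hu.sub ((fderiv ℝ u z).contDiff.add contDiff_const)

theorem convexOn_tangentGap (hu : ConvexOn ℝ Set.univ u) (z : E) :
    ConvexOn ℝ Set.univ (tangentGap u z) :=
  hu.sub (((fderiv ℝ u z).toLinearMap.concaveOn convex_univ).add_const _)

theorem dirDeriv_tangentGap (hu : ContDiff ℝ ∞ u) (z v : E) :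
    D[v] (tangentGap u z) = fun x => D[v] u x - D[v] u z := by
  funext x
  have hderiv : HasFDerivAt (tangentGap u z) (fderiv ℝ u x - fderiv ℝ u z) x :=
    (hu.differentiable (by simp) x).hasFDerivAt.sub ((fderiv ℝ u z).hasFDerivAt.add_const _)
  simp only [dirDeriv, hderiv.fderiv, sub_apply]

theorem dirDeriv_dirDeriv_tangentGap (hu : ContDiff ℝ ∞ u) (z v w : E) :
    D[w] (D[v] (tangentGap u z)) = D[w] (D[v] u) := by
  funext x
  rw [dirDeriv_tangentGap hu, dirDeriv, fderiv_sub_const, dirDeriv]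

namespace IsMongeAmpereSolution

theorem tangentGap (hu : IsMongeAmpereSolution b c u) (z : E) :
    IsMongeAmpereSolution b c (tangentGap u z) where
  contDiff := contDiff_tangentGap hu.contDiff z
  convexOn := convexOn_tangentGap hu.convexOn z
  det_eq x := by
    simpa only [hessianGram, dirDeriv_dirDeriv_tangentGap hu.contDiff] using hu.det_eq x
  const_ne_zero := hu.const_ne_zero

theorem third_eq_zero (hu : IsMongeAmpereSolution b c u) (z ξ : E) :
    D[ξ] (D[ξ] (D[ξ] u)) z = 0 := by
  rw [← dirDeriv_dirDeriv_tangentGap hu.contDiff z ξ ξ]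
  exact (hu.tangentGap z).third_eq_zero_of_critical (tangentGap_self u z)
    (fun v => by simp only [dirDeriv_tangentGap hu.contDiff, sub_self]) ξ

end IsMongeAmpereSolution

end Estimates

/-! ### Quadratic polynomials -/

theorem eq_add_mul_of_hasDerivAt_const {f : ℝ → ℝ} {a : ℝ} (hf : ∀ t, HasDerivAt f a t) (t : ℝ) :
    f t = f 0 + t * a := by
  have hconst := is_const_of_deriv_eq_zero
    (fun s => ((hf s).sub ((hasDerivAt_id s).mul_const a)).differentiableAt)
    (fun s => by rw [((hf s).sub ((hasDerivAt_id s).mul_const a)).deriv]; ring) t 0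
  simp only [Pi.sub_apply, id] at hconst
  linarith

theorem eq_taylor_two_of_third_eq_zero {E : Type*} [NormedAddCommGroup E] [NormedSpace ℝ E]
    {u : E → ℝ} (hu : ContDiff ℝ ∞ u) (hthird : ∀ x ξ, D[ξ] (D[ξ] (D[ξ] u)) x = 0) (x : E) :
    u x = u 0 + D[x] u 0 + 1 / 2 * D[x] (D[x] u) 0 := by
  have hline : ∀ f, ContDiff ℝ ∞ f → ∀ t : ℝ,
      HasDerivAt (fun s : ℝ => f (s • x)) (D[x] f (t • x)) t := fun f hf t => by
    simpa using hasDerivAt_comp_line hf 0 x t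
  have hxu := contDiff_dirDeriv hu x
  have hsecond : ∀ t : ℝ, D[x] (D[x] u) (t • x) = D[x] (D[x] u) 0 := fun t => by
    simpa using eq_add_mul_of_hasDerivAt_const
      (fun s => (hline _ (contDiff_dirDeriv hxu x) s).congr_deriv (hthird _ x)) t
  have hfirst : ∀ t : ℝ, D[x] u (t • x) = D[x] u 0 + t * D[x] (D[x] u) 0 := fun t => by
    simpa using eq_add_mul_of_hasDerivAt_const
      (fun s => (hline _ hxu s).congr_deriv (hsecond s)) t
  have hderiv : ∀ t : ℝ, HasDerivAt (fun s : ℝ => u (s • x) - s ^ 2 * (1 / 2 * D[x] (D[x] u) 0))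
      (D[x] u 0) t := fun t => by
    refine ((hline u hu t).sub ((hasDerivAt_pow 2 t).mul_const _)).congr_deriv ?_
    rw [hfirst]
    norm_num
    ring
  have hvalue := eq_add_mul_of_hasDerivAt_const hderiv 1
  norm_num at hvalue
  linarith

theorem jorgens_calabi_pogorelov_general {E : Type*} [NormedAddCommGroup E] [NormedSpace ℝ E]
    {ι : Type*} [Fintype ι] [DecidableEq ι] {b : Module.Basis ι ℝ E} {c : ℝ} {u : E → ℝ}
    (hu : IsMongeAmpereSolution b c u) (x : E) :
    u x = u 0 + D[x] u 0 + 1 / 2 * D[x] (D[x] u) 0 :=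
  eq_taylor_two_of_third_eq_zero hu.contDiff hu.third_eq_zero x

theorem hessianGram_basisFun {n : ℕ} (u : EuclideanSpace ℝ (Fin n) → ℝ)
    (x : EuclideanSpace ℝ (Fin n)) :
    hessianGram (EuclideanSpace.basisFun (Fin n) ℝ).toBasis u x = hessianMatrix u x := by
  ext i j
  simp only [hessianGram, OrthonormalBasis.coe_toBasis, EuclideanSpace.basisFun_apply]
  rfl

theorem isQuadraticPoly_of_eq_taylor_two {n : ℕ} {u : EuclideanSpace ℝ (Fin n) → ℝ}
    (hu : ContDiff ℝ ∞ u) (htaylor : ∀ x, u x = u 0 + D[x] u 0 + 1 / 2 * D[x] (D[x] u) 0) :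
    IsQuadraticPoly u := by
  refine ⟨hessianMatrix u 0, fun i => D[EuclideanSpace.single i 1] u 0, u 0, ?_, fun x => ?_⟩
  · ext i j
    exact congrFun (dirDeriv_comm hu _ _) 0
  · have hcoord : ∀ f : EuclideanSpace ℝ (Fin n) → ℝ,
        D[x] f 0 = ∑ i, x i * D[EuclideanSpace.single i 1] f 0 := fun f => by
      conv_lhs => rw [← (EuclideanSpace.basisFun (Fin n) ℝ).sum_repr x, sum_smul_dirDeriv]
      simp
    have hquadratic : D[x] (D[x] u) 0 = ∑ i, ∑ j, hessianMatrix u 0 i j * x i * x j := by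
      rw [hcoord]
      refine Finset.sum_congr rfl fun i _ => ?_
      rw [dirDeriv_comm hu, hcoord, Finset.mul_sum]
      refine Finset.sum_congr rfl fun j _ => ?_
      rw [dirDeriv_comm hu, ← mul_assoc, mul_comm, ← mul_assoc]
      rfl
    rw [htaylor x, hquadratic, hcoord u]
    simp only [mul_comm (x _)]
    ring

/-- Jörgens–Calabi–Pogorelov theorem: entire smooth convex solutions of
`det D²u = 1` on ℝⁿ are quadratic polynomials. -/
theorem jorgens_calabi_pogorelov (n : ℕ) (hn : 2 ≤ n)
    (u : EuclideanSpace ℝ (Fin n) → ℝ)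
    (hu : ContDiff ℝ (⊤ : ℕ∞) u)
    (hconv : ConvexOn ℝ Set.univ u)
    (hMA : ∀ x, (hessianMatrix u x).det = 1) :
    IsQuadraticPoly u := by
  have hsolution : IsMongeAmpereSolution (EuclideanSpace.basisFun (Fin n) ℝ).toBasis 1 u :=
    ⟨hu, hconv, fun x => (congrArg _ (hessianGram_basisFun u x)).trans (hMA x), one_ne_zero⟩
  exact isQuadraticPoly_of_eq_taylor_two hu (jorgens_calabi_pogorelov_general hsolution)
end

section
/- (Evans–Krylov Liouville theorem) Let n ≥ 2 and let F be a smooth real-valued function on the n×n real symmetric matrices such that at every symmetric matrix M the derivative matrix DF(M) = (∂F/∂M_{ij}(M)) is positive definite, and such that the set {M symmetric : F(M) ≥ 0} is convex. Let u : ℝⁿ → ℝ be a smooth function with sup_{x ∈ ℝⁿ} ‖D²u(x)‖ < ∞ and F(D²u(x)) = 0 for all x ∈ ℝⁿ. Then u is a quadratic polynomial. -/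
open Real

/-- The derivative matrix `DF(M) = (∂F/∂M_{ij}(M))` of a function `F` of matrices. -/
noncomputable def derivMatrix {n : ℕ} (F : (Fin n → Fin n → ℝ) → ℝ)
    (M : Fin n → Fin n → ℝ) : Matrix (Fin n) (Fin n) ℝ :=
  Matrix.of fun i j => fderiv ℝ F M (Pi.single i (Pi.single j (1 : ℝ)))

/-!
Convexity of `{F ≥ 0}` makes every pure second derivative `u_dd` a subsolution of the linearised
operator `a(x) = DF(D²u(x))`, which is uniformly elliptic because `D²u` has compact closure. Hence
`sup u_dd - u_dd` is an entire nonnegative supersolution with infimum zero. Sliding paraboloids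
under the logarithm of a positive supersolution shows that it stays comparable to a given value on
a fixed proportion of a ball; a covering argument iterates this into geometric decay of the set
where it is much larger. On large balls finitely many supersolutions with infimum zero are
therefore small at a common point, so finitely many `u_dd` nearly attain their suprema
simultaneously. By compactness some limit `M` of Hessians dominates every `D²u(x)`; since
`F(M) = 0 = F(D²u(x))`, strict monotonicity of `F` forces `D²u = M`.
-/

open Set Filter Topology Metric MeasureTheory Matrix
open scoped Gradient

section SecondDerivative

variable {E : Type*} [NormedAddCommGroup E] [NormedSpace ℝ E] {f : E → ℝ} {x : E}

theorem differentiable_fderiv_of_contDiff_two (hf : ContDiff ℝ 2 f) :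
    Differentiable ℝ (fderiv ℝ f) :=
  (hf.fderiv_right (m := 1) (by norm_num)).differentiable one_ne_zero

theorem fderiv_fderiv_apply_const (hf : ContDiff ℝ 2 f) (v w : E) :
    fderiv ℝ (fun y => fderiv ℝ f y w) x v = fderiv ℝ (fderiv ℝ f) x v w := by
  rw [fderiv_clm_apply (differentiable_fderiv_of_contDiff_two hf x) (by fun_prop)]
  simp

theorem fderiv_fderiv_apply_comm (hf : ContDiff ℝ 2 f) (v w : E) :
    (fun x => fderiv ℝ (fun y => fderiv ℝ f y w) x v) =
      fun x => fderiv ℝ (fun y => fderiv ℝ f y v) x w := by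
  ext x
  rw [fderiv_fderiv_apply_const hf, fderiv_fderiv_apply_const hf]
  exact hf.contDiffAt.isSymmSndFDerivAt (by simp) v w

theorem contDiff_fderiv_apply_const {k l : WithTop ℕ∞} (hf : ContDiff ℝ l f) (hkl : k + 1 ≤ l)
    (v : E) : ContDiff ℝ k fun y => fderiv ℝ f y v :=
  (hf.fderiv_right hkl).clm_apply contDiff_const

theorem deriv_comp_add_smul (hf : Differentiable ℝ f) (x v : E) :
    deriv (fun t : ℝ => f (x + t • v)) = fun t => fderiv ℝ f (x + t • v) v := by
  ext t
  have hline : HasDerivAt (fun t : ℝ => x + t • v) v t := by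
    simpa using ((hasDerivAt_id t).smul_const v).const_add x
  exact ((hf _).hasFDerivAt.comp_hasDerivAt t hline).deriv

theorem deriv_deriv_nonneg_of_isLocalMin {φ : ℝ → ℝ} {a : ℝ} (hmin : IsLocalMin φ a)
    (hφ : ContinuousAt φ a) : 0 ≤ deriv (deriv φ) a := by
  by_contra! hneg
  have hmax : IsLocalMax φ a := isLocalMax_of_deriv_deriv_neg hneg hmin.deriv_eq_zero hφ
  have hconst : φ =ᶠ[𝓝 a] fun _ => φ a := by
    filter_upwards [hmin, hmax] with t ht₁ ht₂ using le_antisymm ht₂ ht₁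
  have hzero : deriv (deriv φ) a = 0 := by simpa using hconst.deriv.deriv_eq
  exact hneg.ne hzero

theorem fderiv_fderiv_apply_self_nonneg_of_isLocalMin (hf : ContDiff ℝ 2 f)
    (hmin : IsLocalMin f x) (v : E) : 0 ≤ fderiv ℝ (fderiv ℝ f) x v v := by
  have hline : ContinuousAt (fun t : ℝ => x + t • v) 0 := by fun_prop
  have hmin_zero : IsLocalMin f (x + (0 : ℝ) • v) := by simpa using hmin
  have hnonneg : 0 ≤ deriv (deriv fun t : ℝ => f (x + t • v)) 0 :=
    deriv_deriv_nonneg_of_isLocalMin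
      (IsLocalMin.comp_continuous (g := fun t : ℝ => x + t • v) hmin_zero hline)
      (hf.continuous.continuousAt.comp hline)
  have hfderiv : Differentiable ℝ fun y => fderiv ℝ f y v :=
    (contDiff_fderiv_apply_const (k := 1) hf (by norm_num) v).differentiable one_ne_zero
  rw [deriv_comp_add_smul (hf.differentiable two_ne_zero), deriv_comp_add_smul hfderiv] at hnonneg
  simpa only [fderiv_fderiv_apply_const hf, zero_smul, add_zero] using hnonneg

theorem eq_add_half_of_fderiv_fderiv_eq (hf : ContDiff ℝ 2 f) {B : E →L[ℝ] E →L[ℝ] ℝ}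
    (hB : ∀ x, fderiv ℝ (fderiv ℝ f) x = B) (x : E) :
    f x = 1 / 2 * B x x + fderiv ℝ f 0 x + f 0 := by
  have hfderiv (y : E) : fderiv ℝ f y = B y + fderiv ℝ f 0 := by
    have hdiff (z : E) : HasFDerivAt (𝕜 := ℝ) (fun z => fderiv ℝ f z - B z) 0 z := by
      refine ((differentiable_fderiv_of_contDiff_two hf z).hasFDerivAt.sub
        B.hasFDerivAt).congr_fderiv ?_
      rw [hB, sub_self]
    have := is_const_of_fderiv_eq_zero (fun z => (hdiff z).differentiableAt)
      (fun z => (hdiff z).fderiv) y 0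
    rw [map_zero, sub_zero] at this
    rw [← this, add_sub_cancel]
  have hsymm (v w : E) : B v w = B w v := by
    simpa only [hB] using hf.contDiffAt.isSymmSndFDerivAt (x := 0) (by simp) v w
  have hdiff (y : E) :
      HasFDerivAt (𝕜 := ℝ) (fun y => f y - (1 / 2 * B y y + fderiv ℝ f 0 y)) 0 y := by
    have hquad := (B.hasFDerivAt (x := y)).clm_apply (hasFDerivAt_id y)
    refine ((hf.differentiable two_ne_zero y).hasFDerivAt.sub ((hquad.const_mul (1 / 2)).add
      (fderiv ℝ f 0).hasFDerivAt)).congr_fderiv ?_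
    ext v
    simp only [hfderiv y, ContinuousLinearMap.comp_id, id_eq, _root_.sub_apply, _root_.add_apply,
      _root_.smul_apply, smul_eq_mul, ContinuousLinearMap.flip_apply, hsymm v y, _root_.zero_apply]
    ring
  have := is_const_of_fderiv_eq_zero (fun z => (hdiff z).differentiableAt)
    (fun z => (hdiff z).fderiv) x 0
  simp only [map_zero] at this
  linarith

end SecondDerivative

section HessianMatrix

variable {n : ℕ} {f g : EuclideanSpace ℝ (Fin n) → ℝ} {x : EuclideanSpace ℝ (Fin n)}

theorem sum_smul_euclideanSpace_single (v : EuclideanSpace ℝ (Fin n)) :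
    ∑ i, v i • EuclideanSpace.single i (1 : ℝ) = v := by
  simpa using (EuclideanSpace.basisFun (Fin n) ℝ).sum_repr v

theorem contDiff_hessianMatrix_apply {k l : WithTop ℕ∞} (hf : ContDiff ℝ l f) (hkl : k + 2 ≤ l)
    (i j : Fin n) : ContDiff ℝ k fun x => hessianMatrix f x i j :=
  contDiff_fderiv_apply_const
    (contDiff_fderiv_apply_const (k := k + 1) hf (by rwa [add_assoc, one_add_one_eq_two]) _)
    le_rfl _

theorem continuous_hessianMatrix (hf : ContDiff ℝ 2 f) : Continuous (hessianMatrix f) :=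
  continuous_matrix fun i j =>
    (contDiff_hessianMatrix_apply (k := 0) hf (by norm_num) i j).continuous

theorem hessianMatrix_apply_eq_fderiv_fderiv (hf : ContDiff ℝ 2 f) (i j : Fin n) :
    hessianMatrix f x i j =
      fderiv ℝ (fderiv ℝ f) x (EuclideanSpace.single i 1) (EuclideanSpace.single j 1) :=
  fderiv_fderiv_apply_const hf _ _

theorem fderiv_fderiv_apply_eq_dotProduct (hf : ContDiff ℝ 2 f)
    (v w : EuclideanSpace ℝ (Fin n)) :
    fderiv ℝ (fderiv ℝ f) x v w = v.ofLp ⬝ᵥ hessianMatrix f x *ᵥ w.ofLp := by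
  conv_lhs => rw [← sum_smul_euclideanSpace_single v, ← sum_smul_euclideanSpace_single w]
  simp only [map_sum, map_smul, _root_.sum_apply, _root_.smul_apply, smul_eq_mul, dotProduct,
    mulVec, hessianMatrix_apply_eq_fderiv_fderiv hf, Finset.mul_sum]
  rw [Finset.sum_comm]
  exact Finset.sum_congr rfl fun i _ => Finset.sum_congr rfl fun j _ => by ring

theorem isSymm_hessianMatrix (hf : ContDiff ℝ 2 f) (x : EuclideanSpace ℝ (Fin n)) :
    (hessianMatrix f x).IsSymm :=
  Matrix.IsSymm.ext fun _ _ => congrFun (fderiv_fderiv_apply_comm hf _ _) x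

theorem posSemidef_hessianMatrix_of_isLocalMin (hf : ContDiff ℝ 2 f) (hmin : IsLocalMin f x) :
    (hessianMatrix f x).PosSemidef := by
  refine .of_dotProduct_mulVec_nonneg (isSymm_hessianMatrix hf x) fun v => ?_
  simpa only [star_trivial, fderiv_fderiv_apply_eq_dotProduct hf] using
    fderiv_fderiv_apply_self_nonneg_of_isLocalMin hf hmin (WithLp.toLp 2 v)

theorem hasFDerivAt_gradient (hf : ContDiff ℝ 2 f) (x : EuclideanSpace ℝ (Fin n)) :
    HasFDerivAt (∇ f) (toEuclideanCLM (𝕜 := ℝ) (hessianMatrix f x)) x := by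
  have hdual := (InnerProductSpace.toDual ℝ (EuclideanSpace ℝ (Fin n))).symm.toContinuousLinearEquiv
    |>.hasFDerivAt.comp x (differentiable_fderiv_of_contDiff_two hf x).hasFDerivAt
  refine hdual.congr_fderiv ?_
  ext v i
  have hinner : ((InnerProductSpace.toDual ℝ (EuclideanSpace ℝ (Fin n))).symm
      (fderiv ℝ (fderiv ℝ f) x v)) i = fderiv ℝ (fderiv ℝ f) x v (EuclideanSpace.single i 1) := by
    rw [← InnerProductSpace.toDual_symm_apply, EuclideanSpace.inner_single_right]
    simp
  refine hinner.trans ?_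
  rw [hf.contDiffAt.isSymmSndFDerivAt (by simp), fderiv_fderiv_apply_eq_dotProduct hf]
  simp

theorem gradient_apply (f : EuclideanSpace ℝ (Fin n) → ℝ) (x : EuclideanSpace ℝ (Fin n))
    (i : Fin n) : (∇ f x) i = fderiv ℝ f x (EuclideanSpace.single i 1) := by
  rw [← inner_gradient_left, EuclideanSpace.inner_single_right]
  simp

theorem hessianMatrix_sum_const_mul {ι : Type*} [Fintype ι] (c : ι → ℝ)
    {g : ι → EuclideanSpace ℝ (Fin n) → ℝ} (hg : ∀ k, ContDiff ℝ 2 (g k)) :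
    hessianMatrix (fun y => ∑ k, c k * g k y) x = ∑ k, c k • hessianMatrix (g k) x := by
  ext i j
  have hfst (y v : EuclideanSpace ℝ (Fin n)) :
      fderiv ℝ (fun y => ∑ k, c k * g k y) y v = ∑ k, c k * fderiv ℝ (g k) y v := by
    rw [fderiv_fun_sum fun k _ => ((hg k).differentiable two_ne_zero y).const_mul _]
    simp [fderiv_const_mul ((hg _).differentiable two_ne_zero y)]
  have hfderiv (k : ι) (v : EuclideanSpace ℝ (Fin n)) :
      DifferentiableAt ℝ (fun y => fderiv ℝ (g k) y v) x :=
    (contDiff_fderiv_apply_const (k := 1) (hg k) (by norm_num) v).differentiable one_ne_zero x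
  simp only [hessianMatrix, of_apply, hfst, Matrix.sum_apply, Matrix.smul_apply, smul_eq_mul]
  rw [fderiv_fun_sum fun k _ => (hfderiv k _).const_mul _]
  simp [fderiv_const_mul (hfderiv _ _)]

theorem hessianMatrix_add (hf : ContDiff ℝ 2 f) (hg : ContDiff ℝ 2 g) :
    hessianMatrix (fun y => f y + g y) x = hessianMatrix f x + hessianMatrix g x := by
  simpa using hessianMatrix_sum_const_mul (x := x) ![1, 1] (g := ![f, g]) (by simp [hf, hg])

theorem hessianMatrix_add_const (f : EuclideanSpace ℝ (Fin n) → ℝ) (c : ℝ) :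
    hessianMatrix (fun y => f y + c) x = hessianMatrix f x := by
  simp only [hessianMatrix, fderiv_add_const]

theorem hessianMatrix_const_sub (f : EuclideanSpace ℝ (Fin n) → ℝ) (c : ℝ) :
    hessianMatrix (fun y => c - f y) x = -hessianMatrix f x := by
  ext i j
  simp [hessianMatrix, fderiv_const_sub]

theorem hessianMatrix_log (hf : ContDiff ℝ 2 f) (hpos : ∀ x, 0 < f x) :
    hessianMatrix (fun y => log (f y)) x = (f x)⁻¹ • hessianMatrix f x -
      vecMulVec (∇ (fun y => log (f y)) x).ofLp (∇ (fun y => log (f y)) x).ofLp := by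
  ext i j
  have hdiff (y) : DifferentiableAt ℝ f y := hf.differentiable two_ne_zero y
  have hfst (y v : EuclideanSpace ℝ (Fin n)) :
      fderiv ℝ (fun y => log (f y)) y v = (f y)⁻¹ * fderiv ℝ f y v := by
    simp [fderiv.log (hdiff y) (hpos y).ne']
  have hinv : HasFDerivAt (fun y => (f y)⁻¹) (-(f x ^ 2)⁻¹ • fderiv ℝ f x) x :=
    (hasDerivAt_inv (hpos x).ne').comp_hasFDerivAt x (hdiff x).hasFDerivAt
  have hsnd : DifferentiableAt ℝ (fun y => fderiv ℝ f y (EuclideanSpace.single j 1)) x :=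
    (contDiff_fderiv_apply_const (k := 1) hf (by norm_num) _).differentiable one_ne_zero x
  simp only [hessianMatrix, of_apply, Matrix.sub_apply, Matrix.smul_apply, vecMulVec_apply,
    gradient_apply, hfst, smul_eq_mul]
  rw [(hinv.fun_mul hsnd.hasFDerivAt).fderiv]
  simp only [_root_.add_apply, _root_.smul_apply, smul_eq_mul]
  ring

theorem hasGradientAt_const_mul_norm_sub_sq (β : ℝ) (y x : EuclideanSpace ℝ (Fin n)) :
    HasGradientAt (fun z => β * ‖z - y‖ ^ 2) ((2 * β) • (x - y)) x := by
  rw [hasGradientAt_iff_hasFDerivAt]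
  refine (((hasFDerivAt_id x).sub_const y).norm_sq.const_mul β).congr_fderiv ?_
  ext v
  simp only [_root_.smul_apply, ContinuousLinearMap.comp_apply, innerSL_apply_apply,
    ContinuousLinearMap.id_apply, InnerProductSpace.toDual_apply_apply, real_inner_smul_left,
    smul_eq_mul, id]
  ring

theorem contDiff_const_mul_norm_sub_sq {k : WithTop ℕ∞} (β : ℝ) (y : EuclideanSpace ℝ (Fin n)) :
    ContDiff ℝ k fun z => β * ‖z - y‖ ^ 2 :=
  contDiff_const.mul ((contDiff_id.sub contDiff_const).norm_sq ℝ)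

theorem hessianMatrix_const_mul_norm_sub_sq (β : ℝ) (y : EuclideanSpace ℝ (Fin n)) :
    hessianMatrix (fun z => β * ‖z - y‖ ^ 2) x = (2 * β) • 1 := by
  apply EmbeddingLike.injective (toEuclideanCLM (n := Fin n) (𝕜 := ℝ))
  refine (hasFDerivAt_gradient (contDiff_const_mul_norm_sub_sq β y) x).unique ?_
  rw [funext fun z => (hasGradientAt_const_mul_norm_sub_sq β y z).gradient, map_smul, map_one]
  exact ((hasFDerivAt_id x).sub_const y).const_smul (2 * β)

theorem hessianMatrix_hessianMatrix_comm (hf : ContDiff ℝ 4 f) (i j k l : Fin n) :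
    hessianMatrix (fun y => hessianMatrix f y k l) x i j =
      hessianMatrix (fun y => hessianMatrix f y i j) x k l := by
  have hfst (m : Fin n) : ContDiff ℝ 2 fun y => fderiv ℝ f y (EuclideanSpace.single m 1) :=
    contDiff_fderiv_apply_const hf (by norm_num) _
  have hsnd (m m' : Fin n) : ContDiff ℝ 2 fun z =>
      fderiv ℝ (fun y => fderiv ℝ f y (EuclideanSpace.single m 1)) z (EuclideanSpace.single m' 1) :=
    contDiff_hessianMatrix_apply hf (by norm_num) m' m
  have hf₂ : ContDiff ℝ 2 f := hf.of_le (by norm_num)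
  simp only [hessianMatrix, of_apply]
  rw [fderiv_fderiv_apply_comm (hfst l), congrFun (fderiv_fderiv_apply_comm (hsnd l j) _ _) x,
    fderiv_fderiv_apply_comm hf₂, fderiv_fderiv_apply_comm (hfst j)]

end HessianMatrix

section Matrices

variable {ι : Type*} {A P : Matrix ι ι ℝ}

open scoped MatrixOrder in
theorem trace_mul_nonneg_of_posSemidef [Fintype ι] (hA : A.PosSemidef) (hP : P.PosSemidef) :
    0 ≤ (A * P).trace := by
  classical
  obtain ⟨B, rfl⟩ := CStarAlgebra.nonneg_iff_eq_star_mul_self.mp hP.nonneg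
  rw [← mul_assoc, Matrix.trace_mul_comm, ← mul_assoc]
  exact (hA.mul_mul_conjTranspose_same B).trace_nonneg

theorem trace_mul_vecMulVec [Fintype ι] (A : Matrix ι ι ℝ) (v w : ι → ℝ) :
    (A * vecMulVec v w).trace = w ⬝ᵥ A *ᵥ v := by
  rw [mul_vecMulVec, trace_vecMulVec, dotProduct_comm]

theorem trace_mul_eq_sum_prod [Fintype ι] (A B : Matrix ι ι ℝ) :
    (A * B).trace = ∑ p : ι × ι, A p.1 p.2 * B p.2 p.1 := by
  simp only [trace, diag_apply, mul_apply, Fintype.sum_prod_type]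

theorem continuous_dotProduct_mulVec_self [Fintype ι] (d : ι → ℝ) :
    Continuous fun M : Matrix ι ι ℝ => d ⬝ᵥ M *ᵥ d :=
  continuous_const.dotProduct (continuous_id.matrix_mulVec continuous_const)

variable [DecidableEq ι]

theorem mul_trace_le_trace_mul [Fintype ι] {lam : ℝ} (hA : (A - lam • 1).PosSemidef)
    (hP : P.PosSemidef) : lam * P.trace ≤ (A * P).trace := by
  have := trace_mul_nonneg_of_posSemidef hA hP
  simpa only [sub_mul, trace_sub, smul_mul_assoc, one_mul, trace_smul, smul_eq_mul,
    sub_nonneg] using this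

theorem abs_det_le_trace_pow_of_posSemidef [Fintype ι] (hP : P.PosSemidef) :
    |P.det| ≤ P.trace ^ Fintype.card ι := by
  rw [hP.1.det_eq_prod_eigenvalues, hP.1.trace_eq_sum_eigenvalues]
  simp only [RCLike.ofReal_real_eq_id, id]
  rw [abs_of_nonneg (Finset.prod_nonneg fun i _ => hP.eigenvalues_nonneg i)]
  have hle (i : ι) : hP.1.eigenvalues i ≤ ∑ j, hP.1.eigenvalues j :=
    Finset.single_le_sum (fun j _ => hP.eigenvalues_nonneg j) (Finset.mem_univ i)
  simpa only [Finset.prod_const, Finset.card_univ] using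
    Finset.prod_le_prod (fun i _ => hP.eigenvalues_nonneg i) fun i (_ : i ∈ Finset.univ) => hle i

theorem det_toEuclideanCLM [Fintype ι] (A : Matrix ι ι ℝ) :
    (toEuclideanCLM (𝕜 := ℝ) A).det = A.det := by
  rw [ContinuousLinearMap.det, coe_toEuclideanCLM_eq_toEuclideanLin]
  exact LinearMap.det_toLin (PiLp.basisFun 2 ℝ ι) A

theorem isCompact_setOf_norm_toEuclideanCLM_le [Fintype ι] (C : ℝ) :
    IsCompact {A : Matrix ι ι ℝ | ‖toEuclideanCLM (𝕜 := ℝ) A‖ ≤ C} := by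
  let e : Matrix ι ι ℝ ≃ₗ[ℝ] (EuclideanSpace ℝ ι →L[ℝ] EuclideanSpace ℝ ι) :=
    (toEuclideanCLM (n := ι) (𝕜 := ℝ)).toAlgEquiv.toLinearEquiv
  have hpreimage : {A : Matrix ι ι ℝ | ‖toEuclideanCLM (𝕜 := ℝ) A‖ ≤ C} =
      e.toContinuousLinearEquiv.toHomeomorph ⁻¹' closedBall 0 C := by
    ext A
    simp [e]
  rw [hpreimage, Homeomorph.isCompact_preimage]
  exact isCompact_closedBall 0 C

theorem exists_pos_forall_sub_smul_one_posSemidef [Finite ι] {K : Set (Matrix ι ι ℝ)}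
    (hK : IsCompact K) (hpos : ∀ A ∈ K, A.PosDef) :
    ∃ lam : ℝ, 0 < lam ∧ ∀ A ∈ K, (A - lam • 1).PosSemidef := by
  have := Fintype.ofFinite ι
  obtain ⟨lam, hlam, hle⟩ :=
    (hK.prod (isCompact_sphere (0 : EuclideanSpace ℝ ι) 1)).exists_forall_le' (a := 0)
      (f := fun p => p.2.ofLp ⬝ᵥ p.1 *ᵥ p.2.ofLp) (by fun_prop) (by
        rintro ⟨A, v⟩ ⟨hA, hv⟩
        have hv0 : v ≠ 0 := ne_zero_of_mem_unit_sphere ⟨v, hv⟩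
        simpa using (hpos A hA).dotProduct_mulVec_pos ((WithLp.ofLp_eq_zero 2).not.mpr hv0))
  refine ⟨lam, hlam, fun A hA => .of_dotProduct_mulVec_nonneg ?_ fun v => ?_⟩
  · exact (hpos A hA).1.sub (isHermitian_one.smul (IsSelfAdjoint.all lam))
  rcases eq_or_ne v 0 with rfl | hv
  · simp
  have hnorm : ‖WithLp.toLp 2 v‖ ≠ 0 := by simpa using hv
  have hsphere := hle (A, ‖WithLp.toLp 2 v‖⁻¹ • WithLp.toLp 2 v)
    ⟨hA, by simp [norm_smul, inv_mul_cancel₀ hnorm]⟩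
  have hsq : v ⬝ᵥ v = ‖WithLp.toLp 2 v‖ ^ 2 := by
    rw [← real_inner_self_eq_norm_sq, EuclideanSpace.inner_eq_star_dotProduct, star_trivial]
  simp only [WithLp.ofLp_smul, mulVec_smul, dotProduct_smul, smul_dotProduct, smul_eq_mul,
    ← mul_assoc, ← sq, inv_pow] at hsphere
  rw [inv_mul_eq_div, le_div_iff₀ (by positivity), ← hsq] at hsphere
  simpa only [star_trivial, sub_mulVec, smul_mulVec, one_mulVec, dotProduct_sub, dotProduct_smul,
    smul_eq_mul, sub_nonneg] using hsphere

end Matrices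

section Covering

variable {E : Type*} [NormedAddCommGroup E] [NormedSpace ℝ E]

-- The centre is the first point on the segment from `y` to `z` at which the ball of radius
-- proportional to the distance travelled touches `K`.
theorem exists_ball_subset_sdiff_touching [ProperSpace E] {K : Set E} (hK : IsClosed K) {y z : E}
    {R : ℝ} (hy : y ∈ ball z R \ K) (hKR : (closedBall z R ∩ K).Nonempty) :
    ∃ c r, 0 < r ∧ r ≤ R ∧ y ∈ ball c r ∧ ball c r ⊆ ball z R \ K ∧
      (closedBall c r ∩ K).Nonempty := by
  obtain ⟨hyR, hyK⟩ := hy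
  obtain ⟨p, hpR, hpK⟩ := hKR
  have hR : 0 < R := pos_of_mem_ball hyR
  let c (s : ℝ) : E := AffineMap.lineMap y z s
  have hy_pos : 0 < infDist (c 0) K := by
    simpa [c] using (hK.notMem_iff_infDist_pos ⟨p, hpK⟩).mp hyK
  have hz_le : infDist (c 1) K ≤ 1 * R := by
    simpa [c] using (infDist_le_dist_of_mem hpK).trans (dist_comm p z ▸ hpR)
  obtain ⟨s, ⟨hs₀, hs₁⟩, hs⟩ : ∃ s ∈ Icc (0 : ℝ) 1, infDist (c s) K - s * R = 0 :=
    intermediate_value_Icc' zero_le_one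
      (f := fun s => infDist (c s) K - s * R)
      (by fun_prop) ⟨by linarith, by linarith⟩
  have hs_pos : 0 < s := hs₀.lt_of_ne' fun h => by simp [h, hy_pos.ne'] at hs
  rw [sub_eq_zero] at hs
  refine ⟨c s, s * R, by positivity, mul_le_of_le_one_left hR.le hs₁, ?_, ?_, ?_⟩
  · rw [mem_ball, dist_left_lineMap, norm_of_nonneg hs₀]
    exact mul_lt_mul_of_pos_left hyR hs_pos
  · refine subset_sdiff.mpr ⟨ball_subset_ball' ?_, hs ▸ disjoint_ball_infDist⟩
    rw [dist_lineMap_right, norm_of_nonneg (sub_nonneg.mpr hs₁)]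
    nlinarith [mem_ball.mp hyR]
  · obtain ⟨q, hqK, hq⟩ := hK.exists_infDist_eq_dist ⟨p, hpK⟩ (c s)
    exact ⟨q, mem_closedBall'.mpr (hq ▸ hs.le), hqK⟩

variable [FiniteDimensional ℝ E]

theorem exists_countable_disjoint_balls_covering_sdiff {K : Set E} (hK : IsClosed K) {z : E}
    {R : ℝ} (hKR : (closedBall z R ∩ K).Nonempty) :
    ∃ U : Set (E × ℝ), U.Countable ∧ U.PairwiseDisjoint (fun p => ball p.1 p.2) ∧
      (∀ p ∈ U, 0 < p.2 ∧ ball p.1 p.2 ⊆ ball z R \ K ∧ (closedBall p.1 p.2 ∩ K).Nonempty) ∧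
      ball z R \ K ⊆ ⋃ p ∈ U, closedBall p.1 (5 * p.2) := by
  have := FiniteDimensional.proper_real E
  obtain ⟨U, hU, hdisj, hcover⟩ := Vitali.exists_disjoint_subfamily_covering_enlargement_closedBall
    {p : E × ℝ | 0 < p.2 ∧ p.2 ≤ R ∧ ball p.1 p.2 ⊆ ball z R \ K ∧
      (closedBall p.1 p.2 ∩ K).Nonempty} Prod.fst Prod.snd R (fun p hp => hp.2.1) 5 (by norm_num)
  refine ⟨U, ?_, hdisj.mono fun p => ball_subset_closedBall,
    fun p hp => ⟨(hU hp).1, (hU hp).2.2⟩, fun y hy => ?_⟩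
  · exact hdisj.countable_of_nonempty_interior fun p hp =>
      ⟨p.1, ball_subset_interior_closedBall (mem_ball_self (hU hp).1)⟩
  · obtain ⟨c, r, hr, hrR, hyc, hsub, hne⟩ := exists_ball_subset_sdiff_touching hK hy hKR
    obtain ⟨p, hp, hle⟩ := hcover (c, r) ⟨hr, hrR, hsub, hne⟩
    exact mem_biUnion hp (hle (ball_subset_closedBall hyc))

variable [MeasurableSpace E] [BorelSpace E] (μ : Measure E)
  [μ.IsAddHaarMeasure]

theorem addHaar_closedBall_five_mul_eq (p : E) {r : ℝ} (hr : 0 < r) :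
    μ (closedBall p (5 * r)) = 10 ^ Module.finrank ℝ E * μ (ball p (r / 2)) := by
  rw [Measure.addHaar_closedBall μ p (by positivity),
    Measure.addHaar_ball_of_pos μ p (half_pos hr), ← mul_assoc,
    show 5 * r = 10 * (r / 2) by ring, mul_pow, ENNReal.ofReal_mul (by positivity),
    ENNReal.ofReal_pow (by norm_num), ENNReal.ofReal_ofNat]

theorem addHaar_ball_sdiff_le_of_touching_balls {K G : Set E} (hK : IsClosed K)
    (hG : MeasurableSet G) {c : ENNReal}
    (hdens : ∀ p r, 0 < r → (closedBall p r ∩ K).Nonempty →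
      μ (ball p (r / 2)) ≤ c * μ (ball p r ∩ G))
    {z : E} {R : ℝ} (hKR : (closedBall z R ∩ K).Nonempty) :
    μ (ball z R \ K) ≤ 10 ^ Module.finrank ℝ E * c * μ ((ball z R \ K) ∩ G) := by
  obtain ⟨U, hUc, hdisj, hU, hcover⟩ := exists_countable_disjoint_balls_covering_sdiff hK hKR
  have hball (p : U) : μ (closedBall p.1.1 (5 * p.1.2)) ≤
      10 ^ Module.finrank ℝ E * c * μ (ball p.1.1 p.1.2 ∩ G) := by
    obtain ⟨hr, -, hne⟩ := hU p p.2
    rw [addHaar_closedBall_five_mul_eq μ _ hr, mul_assoc]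
    gcongr
    exact hdens _ _ hr hne
  calc μ (ball z R \ K)
    _ ≤ ∑' p : U, μ (closedBall p.1.1 (5 * p.1.2)) :=
      (measure_mono hcover).trans (measure_biUnion_le μ hUc _)
    _ ≤ ∑' p : U, 10 ^ Module.finrank ℝ E * c * μ (ball p.1.1 p.1.2 ∩ G) :=
      ENNReal.tsum_le_tsum hball
    _ = 10 ^ Module.finrank ℝ E * c * μ (⋃ p ∈ U, ball p.1 p.2 ∩ G) := by
      rw [ENNReal.tsum_mul_left, measure_biUnion hUc (hdisj.mono fun p => inter_subset_left)
        fun p _ => measurableSet_ball.inter hG]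
    _ ≤ 10 ^ Module.finrank ℝ E * c * μ ((ball z R \ K) ∩ G) := by
      gcongr
      exact iUnion₂_subset fun p hp => inter_subset_inter_left G (hU p hp).2.1

end Covering

theorem measureReal_sdiff_le_div_mul {α : Type*} [MeasurableSpace α] {μ : Measure α}
    {A S : Set α} (hA : μ A ≠ ⊤) (hS : MeasurableSet S) {c : ℝ} (hc : 0 ≤ c)
    (hAS : μ A ≤ ENNReal.ofReal c * μ (A ∩ S)) : μ.real (A \ S) ≤ c / (c + 1) * μ.real A := by
  have hreal : μ.real A ≤ c * μ.real (A ∩ S) := by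
    have htop : ENNReal.ofReal c * μ (A ∩ S) ≠ ⊤ :=
      ENNReal.mul_ne_top ENNReal.ofReal_ne_top (measure_ne_top_of_subset inter_subset_left hA)
    simpa only [measureReal_def, ENNReal.toReal_mul, ENNReal.toReal_ofReal hc] using
      ENNReal.toReal_mono htop hAS
  have hsplit := measureReal_inter_add_sdiff hS hA
  rw [← hsplit] at hreal ⊢
  rw [div_mul_eq_mul_div, le_div_iff₀ (by positivity)]
  linarith [measureReal_nonneg (μ := μ) (s := A ∩ S)]

section ContactMap

variable {n : ℕ} {β : ℝ} {v : EuclideanSpace ℝ (Fin n) → ℝ} {x y : EuclideanSpace ℝ (Fin n)}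

/-- The contact map of `v` with opening `β`: it sends a minimum point of `v + β ‖· - y‖²` to the
vertex `y`, as the gradient vanishes there. -/
noncomputable def contactMap (β : ℝ) (v : EuclideanSpace ℝ (Fin n) → ℝ)
    (x : EuclideanSpace ℝ (Fin n)) : EuclideanSpace ℝ (Fin n) :=
  x + (2 * β)⁻¹ • ∇ v x

/-- The Jacobian matrix of `contactMap β v` at `x`. -/
noncomputable def contactJacobian (β : ℝ) (v : EuclideanSpace ℝ (Fin n) → ℝ)
    (x : EuclideanSpace ℝ (Fin n)) : Matrix (Fin n) (Fin n) ℝ :=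
  1 + (2 * β)⁻¹ • hessianMatrix v x

theorem hasFDerivAt_contactMap (β : ℝ) (hv : ContDiff ℝ 2 v) (x : EuclideanSpace ℝ (Fin n)) :
    HasFDerivAt (contactMap β v) (toEuclideanCLM (𝕜 := ℝ) (contactJacobian β v x)) x := by
  rw [contactJacobian, map_add, map_one, map_smul]
  exact (hasFDerivAt_id x).add ((hasFDerivAt_gradient hv x).fun_const_smul _)

theorem continuous_det_contactJacobian (β : ℝ) (hv : ContDiff ℝ 2 v) :
    Continuous fun x => (contactJacobian β v x).det := by
  have := continuous_hessianMatrix hv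
  unfold contactJacobian
  fun_prop

theorem gradient_eq_of_isLocalMin_add_norm_sub_sq (hv : DifferentiableAt ℝ v x)
    (hmin : IsLocalMin (fun z => v z + β * ‖z - y‖ ^ 2) x) : ∇ v x = -((2 * β) • (x - y)) := by
  have hgrad := hmin.hasFDerivAt_eq_zero
    (hv.hasFDerivAt.add (hasGradientAt_const_mul_norm_sub_sq β y x).hasFDerivAt)
  rw [gradient, eq_neg_of_add_eq_zero_left hgrad, map_neg, LinearIsometryEquiv.symm_apply_apply]

theorem contactMap_eq_of_isLocalMin (hβ : β ≠ 0) (hv : DifferentiableAt ℝ v x)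
    (hmin : IsLocalMin (fun z => v z + β * ‖z - y‖ ^ 2) x) : contactMap β v x = y := by
  rw [contactMap, gradient_eq_of_isLocalMin_add_norm_sub_sq hv hmin, smul_neg,
    inv_smul_smul₀ (mul_ne_zero two_ne_zero hβ), neg_sub, add_sub_cancel]

theorem posSemidef_contactJacobian_of_isLocalMin (hβ : 0 < β) (hv : ContDiff ℝ 2 v)
    (hmin : IsLocalMin (fun z => v z + β * ‖z - y‖ ^ 2) x) :
    (contactJacobian β v x).PosSemidef := by
  have hquad : ContDiff ℝ 2 fun z => β * ‖z - y‖ ^ 2 := contDiff_const_mul_norm_sub_sq β y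
  have hhess := posSemidef_hessianMatrix_of_isLocalMin (hv.add hquad) hmin
  rw [hessianMatrix_add hv hquad, hessianMatrix_const_mul_norm_sub_sq] at hhess
  have hJ : contactJacobian β v x = (2 * β)⁻¹ • (hessianMatrix v x + (2 * β) • 1) := by
    rw [smul_add, inv_smul_smul₀ (by positivity), add_comm, contactJacobian]
  exact hJ ▸ hhess.smul (by positivity)

theorem volume_image_contactMap_le {D : ℝ} (hv : ContDiff ℝ 2 v)
    {A : Set (EuclideanSpace ℝ (Fin n))} (hA : MeasurableSet A)
    (hdet : ∀ x ∈ A, |(contactJacobian β v x).det| ≤ D) :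
    volume (contactMap β v '' A) ≤ ENNReal.ofReal D * volume A :=
  calc volume (contactMap β v '' A)
    _ ≤ ∫⁻ x in A, ENNReal.ofReal |(toEuclideanCLM (𝕜 := ℝ) (contactJacobian β v x)).det| :=
      addHaar_image_le_lintegral_abs_det_fderiv volume hA fun x _ =>
        (hasFDerivAt_contactMap β hv x).hasFDerivWithinAt
    _ ≤ ∫⁻ _ in A, ENNReal.ofReal D :=
      setLIntegral_mono' hA fun x hx => by
        rw [det_toEuclideanCLM]
        exact ENNReal.ofReal_le_ofReal (hdet x hx)
    _ = ENNReal.ofReal D * volume A := setLIntegral_const A _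

theorem exists_forall_add_mul_norm_sub_sq_le {E : Type*} [NormedAddCommGroup E] [ProperSpace E]
    {v : E → ℝ} (hv : Continuous v) {b β : ℝ} (hb : ∀ x, b ≤ v x) (hβ : 0 < β) (y : E) :
    ∃ x, ∀ z, v x + β * ‖x - y‖ ^ 2 ≤ v z + β * ‖z - y‖ ^ 2 := by
  refine Continuous.exists_forall_le (by fun_prop)
    (tendsto_atTop_add_left_of_le _ b hb (Tendsto.const_mul_atTop hβ ?_))
  simpa only [Function.comp_def, dist_eq_norm] using
    (tendsto_pow_atTop two_ne_zero).comp (tendsto_dist_right_cocompact_atTop y)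

end ContactMap

section Supersolution

variable {n : ℕ} {lam Lam β : ℝ}
  {a : EuclideanSpace ℝ (Fin n) → Matrix (Fin n) (Fin n) ℝ} {w : EuclideanSpace ℝ (Fin n) → ℝ}
  {x y : EuclideanSpace ℝ (Fin n)}

/-- Uniform ellipticity of a field `a` of coefficient matrices. The upper bound is imposed on the
trace rather than on the largest eigenvalue. -/
structure IsUniformlyElliptic (lam Lam : ℝ)
    (a : EuclideanSpace ℝ (Fin n) → Matrix (Fin n) (Fin n) ℝ) : Prop where
  lower_pos : 0 < lam
  upper_pos : 0 < Lam
  sub_smul_one_posSemidef : ∀ x, (a x - lam • 1).PosSemidef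
  trace_le : ∀ x, (a x).trace ≤ Lam

/-- Entire nonnegative classical solutions of `∑ aᵢⱼ ∂ᵢ∂ⱼ w ≤ 0`. -/
structure IsNonnegSupersolution (a : EuclideanSpace ℝ (Fin n) → Matrix (Fin n) (Fin n) ℝ)
    (w : EuclideanSpace ℝ (Fin n) → ℝ) : Prop where
  contDiff : ContDiff ℝ 2 w
  nonneg : ∀ x, 0 ≤ w x
  trace_mul_hessianMatrix_nonpos : ∀ x, (a x * hessianMatrix w x).trace ≤ 0

theorem IsNonnegSupersolution.add_const (hw : IsNonnegSupersolution a w) {t : ℝ} (ht : 0 ≤ t) :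
    IsNonnegSupersolution a fun x => w x + t where
  contDiff := hw.contDiff.add contDiff_const
  nonneg x := add_nonneg (hw.nonneg x) ht
  trace_mul_hessianMatrix_nonpos x := by
    rw [hessianMatrix_add_const]
    exact hw.trace_mul_hessianMatrix_nonpos x

theorem IsUniformlyElliptic.mul_norm_sq_le (ha : IsUniformlyElliptic lam Lam a)
    (x g : EuclideanSpace ℝ (Fin n)) : lam * ‖g‖ ^ 2 ≤ g.ofLp ⬝ᵥ a x *ᵥ g.ofLp := by
  have hnonneg := (ha.sub_smul_one_posSemidef x).dotProduct_mulVec_nonneg g.ofLp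
  rw [← real_inner_self_eq_norm_sq, EuclideanSpace.inner_eq_star_dotProduct]
  simpa only [star_trivial, sub_mulVec, smul_mulVec, one_mulVec, dotProduct_sub, dotProduct_smul,
    smul_eq_mul, sub_nonneg] using hnonneg

-- The logarithm contributes the term `-⟨a ∇v, ∇v⟩` to the equation, which controls how far the
-- contact point `x` can be from the vertex `y`.
theorem IsNonnegSupersolution.trace_contactJacobian_log_add_le (hw : IsNonnegSupersolution a w)
    (ha : IsUniformlyElliptic lam Lam a) (hpos : ∀ x, 0 < w x) (hβ : 0 < β)
    (hmin : IsLocalMin (fun z => log (w z) + β * ‖z - y‖ ^ 2) x) :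
    lam * (contactJacobian β (fun z => log (w z)) x).trace + 2 * β * lam * ‖x - y‖ ^ 2 ≤ Lam := by
  have hlog : ContDiff ℝ 2 fun z => log (w z) := hw.contDiff.log fun z => (hpos z).ne'
  have htrace := mul_trace_le_trace_mul (ha.sub_smul_one_posSemidef x)
    (posSemidef_contactJacobian_of_isLocalMin hβ hlog hmin)
  have hgrad : ‖∇ (fun z => log (w z)) x‖ ^ 2 = (2 * β) ^ 2 * ‖x - y‖ ^ 2 := by
    rw [gradient_eq_of_isLocalMin_add_norm_sub_sq (hlog.differentiable two_ne_zero x) hmin,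
      norm_neg, norm_smul, mul_pow, norm_eq_abs, sq_abs]
  have hquad := ha.mul_norm_sq_le x (∇ (fun z => log (w z)) x)
  have hsuper : (w x)⁻¹ * (a x * hessianMatrix w x).trace ≤ 0 :=
    mul_nonpos_of_nonneg_of_nonpos (inv_nonneg.mpr (hw.nonneg x))
      (hw.trace_mul_hessianMatrix_nonpos x)
  have hexpand : (a x * contactJacobian β (fun z => log (w z)) x).trace = (a x).trace +
      (2 * β)⁻¹ * ((w x)⁻¹ * (a x * hessianMatrix w x).trace -
        (∇ (fun z => log (w z)) x).ofLp ⬝ᵥ a x *ᵥ (∇ (fun z => log (w z)) x).ofLp) := by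
    simp only [contactJacobian, hessianMatrix_log hw.contDiff hpos, mul_add, mul_one, mul_sub,
      mul_smul_comm, trace_add, trace_sub, trace_smul, smul_eq_mul, trace_mul_vecMulVec]
  rw [hgrad] at hquad
  calc lam * (contactJacobian β (fun z => log (w z)) x).trace + 2 * β * lam * ‖x - y‖ ^ 2
    _ ≤ (a x).trace + (2 * β)⁻¹ * (0 - lam * ((2 * β) ^ 2 * ‖x - y‖ ^ 2)) +
        2 * β * lam * ‖x - y‖ ^ 2 := by
      rw [hexpand] at htrace
      grw [htrace, hsuper, hquad]
    _ = (a x).trace := by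
      field_simp
      ring
    _ ≤ Lam := ha.trace_le x

theorem IsNonnegSupersolution.norm_sub_sq_le_of_isLocalMin (hw : IsNonnegSupersolution a w)
    (ha : IsUniformlyElliptic lam Lam a) (hpos : ∀ x, 0 < w x) (hβ : 0 < β)
    (hmin : IsLocalMin (fun z => log (w z) + β * ‖z - y‖ ^ 2) x) :
    2 * β * lam * ‖x - y‖ ^ 2 ≤ Lam := by
  have hlog : ContDiff ℝ 2 fun z => log (w z) := hw.contDiff.log fun z => (hpos z).ne'
  have htrace := mul_nonneg ha.lower_pos.le
    (posSemidef_contactJacobian_of_isLocalMin hβ hlog hmin).trace_nonneg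
  linarith [hw.trace_contactJacobian_log_add_le ha hpos hβ hmin]

theorem IsNonnegSupersolution.abs_det_contactJacobian_log_le (hw : IsNonnegSupersolution a w)
    (ha : IsUniformlyElliptic lam Lam a) (hpos : ∀ x, 0 < w x) (hβ : 0 < β)
    (hmin : IsLocalMin (fun z => log (w z) + β * ‖z - y‖ ^ 2) x) :
    |(contactJacobian β (fun z => log (w z)) x).det| ≤ (Lam / lam) ^ n := by
  have hlog : ContDiff ℝ 2 fun z => log (w z) := hw.contDiff.log fun z => (hpos z).ne'
  have hJ := posSemidef_contactJacobian_of_isLocalMin hβ hlog hmin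
  have hlam := ha.lower_pos
  have hdist : 0 ≤ 2 * β * lam * ‖x - y‖ ^ 2 := by positivity
  have htrace : (contactJacobian β (fun z => log (w z)) x).trace ≤ Lam / lam := by
    rw [le_div_iff₀' hlam]
    linarith [hw.trace_contactJacobian_log_add_le ha hpos hβ hmin]
  refine (abs_det_le_trace_pow_of_posSemidef hJ).trans ?_
  rw [Fintype.card_fin]
  exact pow_le_pow_left₀ hJ.trace_nonneg htrace n

theorem IsNonnegSupersolution.mem_ball_of_isLocalMin (hw : IsNonnegSupersolution a w)
    (ha : IsUniformlyElliptic lam Lam a) (hpos : ∀ x, 0 < w x) {z : EuclideanSpace ℝ (Fin n)}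
    {r : ℝ} (hβ : 0 < β) (hr : 0 < r) (hβr : β * r ^ 2 = 4 * (Lam / (2 * lam)))
    (hmin : IsLocalMin (fun z => log (w z) + β * ‖z - y‖ ^ 2) x) (hy : y ∈ ball z (r / 2)) :
    x ∈ ball z r := by
  have hlam := ha.lower_pos
  have hβlam : 2 * β * lam * (r / 2) ^ 2 = Lam := by
    field_simp at hβr ⊢
    linarith
  have hsq : ‖x - y‖ ^ 2 ≤ (r / 2) ^ 2 :=
    le_of_mul_le_mul_left (hβlam ▸ hw.norm_sub_sq_le_of_isLocalMin ha hpos hβ hmin)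
      (by positivity : 0 < 2 * β * lam)
  have hdist : dist x y ≤ r / 2 := by
    rw [dist_eq_norm]
    exact le_of_sq_le_sq hsq (by positivity)
  rw [mem_ball]
  linarith [dist_triangle x y z, mem_ball.mp hy]

theorem le_exp_mul_of_forall_log_add_le {z p : EuclideanSpace ℝ (Fin n)} {r c : ℝ} (hβ : 0 ≤ β)
    (hβr : β * r ^ 2 = 4 * c) (hpos : ∀ x, 0 < w x)
    (hmin : ∀ z, log (w x) + β * ‖x - y‖ ^ 2 ≤ log (w z) + β * ‖z - y‖ ^ 2)
    (hy : y ∈ ball z (r / 2)) (hp : p ∈ closedBall z r) : w x ≤ exp (9 * c) * w p := by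
  have hdist : ‖p - y‖ ≤ 3 / 2 * r := by
    rw [← dist_eq_norm]
    linarith [dist_triangle_right p y z, mem_closedBall.mp hp, mem_ball.mp hy]
  have hpen : β * ‖p - y‖ ^ 2 ≤ 9 * c := by
    grw [hdist, mul_pow]
    linarith
  have hlog : log (w x) ≤ 9 * c + log (w p) := by
    linarith [hmin p, mul_nonneg hβ (sq_nonneg ‖x - y‖)]
  rwa [log_le_iff_le_exp (hpos x), exp_add, exp_log (hpos p)] at hlog

theorem IsNonnegSupersolution.volume_ball_half_le_of_pos (hw : IsNonnegSupersolution a w)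
    (ha : IsUniformlyElliptic lam Lam a) {ε : ℝ} (hε : 0 < ε) (hεw : ∀ x, ε ≤ w x)
    {z p : EuclideanSpace ℝ (Fin n)} {r : ℝ} (hr : 0 < r) (hp : p ∈ closedBall z r) :
    volume (ball z (r / 2)) ≤ ENNReal.ofReal ((Lam / lam) ^ n) *
      volume (ball z r ∩ {x | w x ≤ exp (9 * (Lam / (2 * lam))) * w p}) := by
  have hpos (x) : 0 < w x := hε.trans_le (hεw x)
  have hlog : ContDiff ℝ 2 fun z => log (w z) := hw.contDiff.log fun z => (hpos z).ne'
  have hlam := ha.lower_pos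
  have hLam := ha.upper_pos
  obtain ⟨β, hβ, hβr⟩ : ∃ β, 0 < β ∧ β * r ^ 2 = 4 * (Lam / (2 * lam)) :=
    ⟨4 * (Lam / (2 * lam)) / r ^ 2, by positivity, by field_simp⟩
  set G := ball z r ∩ {x | w x ≤ exp (9 * (Lam / (2 * lam))) * w p}
  set S := {x | |(contactJacobian β (fun z => log (w z)) x).det| ≤ (Lam / lam) ^ n}
  have hG : MeasurableSet G :=
    measurableSet_ball.inter (isClosed_le hw.contDiff.continuous continuous_const).measurableSet
  have hS : MeasurableSet S :=
    (isClosed_le (continuous_det_contactJacobian β hlog).abs continuous_const).measurableSet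
  have hcover : ball z (r / 2) ⊆ contactMap β (fun z => log (w z)) '' (G ∩ S) := by
    intro y hy
    obtain ⟨x, hx⟩ := exists_forall_add_mul_norm_sub_sq_le hlog.continuous
      (fun x => log_le_log hε (hεw x)) hβ y
    have hmin : IsLocalMin (fun z => log (w z) + β * ‖z - y‖ ^ 2) x := .of_forall hx
    refine ⟨x, ⟨⟨?_, ?_⟩, hw.abs_det_contactJacobian_log_le ha hpos hβ hmin⟩,
      contactMap_eq_of_isLocalMin hβ.ne' (hlog.differentiable two_ne_zero x) hmin⟩
    · exact hw.mem_ball_of_isLocalMin ha hpos hβ hr hβr hmin hy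
    · exact le_exp_mul_of_forall_log_add_le hβ.le hβr hpos hx hy hp
  calc volume (ball z (r / 2))
    _ ≤ volume (contactMap β (fun z => log (w z)) '' (G ∩ S)) := measure_mono hcover
    _ ≤ ENNReal.ofReal ((Lam / lam) ^ n) * volume (G ∩ S) :=
      volume_image_contactMap_le hlog (hG.inter hS) fun x hx => hx.2
    _ ≤ ENNReal.ofReal ((Lam / lam) ^ n) * volume G := by
      gcongr
      exact inter_subset_left

/-- The factor by which a nonnegative supersolution can exceed its value at one point on a fixed
portion of a ball around that point. -/
noncomputable def growthFactor (lam Lam : ℝ) : ℝ :=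
  2 * exp (9 * (Lam / (2 * lam)))

theorem IsNonnegSupersolution.volume_ball_half_le (hw : IsNonnegSupersolution a w)
    (ha : IsUniformlyElliptic lam Lam a) {t : ℝ} (ht : 0 < t) {z p : EuclideanSpace ℝ (Fin n)}
    {r : ℝ} (hr : 0 < r) (hp : p ∈ closedBall z r) (hpt : w p ≤ t) :
    volume (ball z (r / 2)) ≤ ENNReal.ofReal ((Lam / lam) ^ n) *
      volume (ball z r ∩ {x | w x ≤ growthFactor lam Lam * t}) := by
  refine ((hw.add_const ht.le).volume_ball_half_le_of_pos ha ht
    (fun x => le_add_of_nonneg_left (hw.nonneg x)) hr hp).trans ?_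
  gcongr ENNReal.ofReal _ * volume (_ ∩ {x | ?_}) with x
  intro hx
  calc w x ≤ w x + t := le_add_of_nonneg_right ht.le
    _ ≤ exp (9 * (Lam / (2 * lam))) * (w p + t) := hx
    _ ≤ exp (9 * (Lam / (2 * lam))) * (t + t) := by gcongr
    _ = growthFactor lam Lam * t := by rw [growthFactor]; ring

end Supersolution

section Decay

variable {n : ℕ} {lam Lam : ℝ}
  {a : EuclideanSpace ℝ (Fin n) → Matrix (Fin n) (Fin n) ℝ} {w : EuclideanSpace ℝ (Fin n) → ℝ}

/-- The rate at which the superlevel sets of a nonnegative supersolution shrink in measure when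
the level is multiplied by `growthFactor lam Lam`. -/
noncomputable def decayRate (n : ℕ) (lam Lam : ℝ) : ℝ :=
  10 ^ n * (Lam / lam) ^ n / (10 ^ n * (Lam / lam) ^ n + 1)

theorem IsUniformlyElliptic.decayRate_nonneg (ha : IsUniformlyElliptic lam Lam a) :
    0 ≤ decayRate n lam Lam := by
  have := ha.lower_pos
  have := ha.upper_pos
  unfold decayRate
  positivity

theorem IsUniformlyElliptic.decayRate_lt_one (ha : IsUniformlyElliptic lam Lam a) :
    decayRate n lam Lam < 1 := by
  have := ha.lower_pos
  have := ha.upper_pos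
  rw [decayRate, div_lt_one (by positivity)]
  exact lt_add_one _

theorem IsUniformlyElliptic.one_le_growthFactor (ha : IsUniformlyElliptic lam Lam a) :
    1 ≤ growthFactor lam Lam := by
  have := ha.lower_pos
  have := ha.upper_pos
  have : 1 ≤ exp (9 * (Lam / (2 * lam))) := one_le_exp (by positivity)
  rw [growthFactor]
  linarith

theorem IsNonnegSupersolution.measureReal_ball_sdiff_growthFactor_le
    (hw : IsNonnegSupersolution a w) (ha : IsUniformlyElliptic lam Lam a)
    {z p : EuclideanSpace ℝ (Fin n)} {R t : ℝ} (ht : 0 < t) (hp : p ∈ closedBall z R)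
    (hpt : w p ≤ t) :
    volume.real (ball z R \ {x | w x ≤ growthFactor lam Lam * t}) ≤
      decayRate n lam Lam * volume.real (ball z R \ {x | w x ≤ t}) := by
  have hlam := ha.lower_pos
  have hLam := ha.upper_pos
  have hclosed (s : ℝ) : IsClosed {x | w x ≤ s} :=
    isClosed_le hw.contDiff.continuous continuous_const
  have hcover := addHaar_ball_sdiff_le_of_touching_balls volume (hclosed t)
    (hclosed (growthFactor lam Lam * t)).measurableSet
    (fun z r hr ⟨q, hq, hqt⟩ => hw.volume_ball_half_le ha ht hr hq hqt) ⟨p, hp, hpt⟩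
  have hconst : 10 ^ n * ENNReal.ofReal ((Lam / lam) ^ n) =
      ENNReal.ofReal (10 ^ n * (Lam / lam) ^ n) := by
    rw [ENNReal.ofReal_mul (by positivity), ENNReal.ofReal_pow (p := 10) (by norm_num),
      ENNReal.ofReal_ofNat]
  rw [finrank_euclideanSpace_fin, hconst] at hcover
  have hsub : {x | w x ≤ t} ⊆ {x | w x ≤ growthFactor lam Lam * t} := fun x hx =>
    hx.trans (le_mul_of_one_le_left ht.le ha.one_le_growthFactor)
  have hdecay := measureReal_sdiff_le_div_mul
    (measure_ne_top_of_subset sdiff_subset measure_ball_lt_top.ne)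
    (hclosed (growthFactor lam Lam * t)).measurableSet (by positivity) hcover
  rwa [Set.sdiff_sdiff, union_eq_right.mpr hsub] at hdecay

theorem IsNonnegSupersolution.measureReal_ball_sdiff_growthFactor_pow_le
    (hw : IsNonnegSupersolution a w) (ha : IsUniformlyElliptic lam Lam a)
    {z p : EuclideanSpace ℝ (Fin n)} {R t : ℝ} (ht : 0 < t) (hp : p ∈ closedBall z R)
    (hpt : w p ≤ t) (k : ℕ) :
    volume.real (ball z R \ {x | w x ≤ growthFactor lam Lam ^ k * t}) ≤
      decayRate n lam Lam ^ k * volume.real (ball z R) := by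
  induction k with
  | zero => simpa using measureReal_mono sdiff_subset measure_ball_lt_top.ne
  | succ k ih =>
    have hle : t ≤ growthFactor lam Lam ^ k * t :=
      le_mul_of_one_le_left ht.le (one_le_pow₀ ha.one_le_growthFactor)
    have hstep := hw.measureReal_ball_sdiff_growthFactor_le ha (ht.trans_le hle) hp (hpt.trans hle)
    rw [pow_succ', mul_assoc, pow_succ', mul_assoc]
    exact hstep.trans (mul_le_mul_of_nonneg_left ih ha.decayRate_nonneg)

-- On a large ball each supersolution is small off a set of small proportion, so finitely many are
-- small at a common point.
theorem exists_forall_le_of_isNonnegSupersolution {ι : Type*} [Finite ι]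
    {w : ι → EuclideanSpace ℝ (Fin n) → ℝ} (ha : IsUniformlyElliptic lam Lam a)
    (hw : ∀ i, IsNonnegSupersolution a (w i)) (hinf : ∀ i, ∀ η > 0, ∃ x, w i x ≤ η)
    {ε : ι → ℝ} (hε : ∀ i, 0 < ε i) : ∃ x, ∀ i, w i x ≤ ε i := by
  have := Fintype.ofFinite ι
  obtain ⟨k, hk⟩ := exists_pow_lt_of_lt_one
    (show (0 : ℝ) < 1 / (Fintype.card ι + 1) by positivity) ha.decayRate_lt_one
  have hgrowth : 0 < growthFactor lam Lam ^ k :=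
    pow_pos (zero_lt_one.trans_le ha.one_le_growthFactor) k
  have hpos (i : ι) : 0 < ε i / growthFactor lam Lam ^ k := div_pos (hε i) hgrowth
  choose p hp using fun i => hinf i _ (hpos i)
  obtain ⟨R, hR, hpR⟩ := (finite_range p).isBounded.subset_closedBall_lt 0 0
  set V := volume.real (ball (0 : EuclideanSpace ℝ (Fin n)) R)
  have hV : 0 < V := ENNReal.toReal_pos (measure_ball_pos _ _ hR).ne' measure_ball_lt_top.ne
  have hsmall (i : ι) : volume.real (ball 0 R \ {x | w i x ≤ ε i}) ≤
      1 / (Fintype.card ι + 1) * V := by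
    have hdecay := (hw i).measureReal_ball_sdiff_growthFactor_pow_le ha (hpos i)
      (hpR (mem_range_self i)) (hp i) k
    rw [mul_div_cancel₀ _ hgrowth.ne'] at hdecay
    exact hdecay.trans (mul_le_mul_of_nonneg_right hk.le hV.le)
  by_contra! hlarge
  have hcover : ball 0 R ⊆ ⋃ i, ball 0 R \ {x | w i x ≤ ε i} := fun x hx =>
    let ⟨i, hi⟩ := hlarge x
    mem_iUnion.mpr ⟨i, hx, hi.not_ge⟩
  have hlt : V < V := calc
    V ≤ ∑ i, volume.real (ball 0 R \ {x | w i x ≤ ε i}) :=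
      (measureReal_mono hcover (measure_ne_top_of_subset
        (iUnion_subset fun i => sdiff_subset) measure_ball_lt_top.ne)).trans
        (measureReal_iUnion_fintype_le _)
    _ ≤ ∑ _i : ι, 1 / (Fintype.card ι + 1) * V := Finset.sum_le_sum fun i _ => hsmall i
    _ = Fintype.card ι / (Fintype.card ι + 1) * V := by
      rw [Finset.sum_const, Finset.card_univ, nsmul_eq_mul]
      ring
    _ < V := mul_lt_of_lt_one_left hV ((div_lt_one (by positivity)).mpr (lt_add_one _))
  exact hlt.false

end Decay

section DerivMatrix

variable {n : ℕ} {F : (Fin n → Fin n → ℝ) → ℝ}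

theorem fderiv_eq_sum_derivMatrix_mul (F : (Fin n → Fin n → ℝ) → ℝ) (M P : Fin n → Fin n → ℝ) :
    fderiv ℝ F M P = ∑ i, ∑ j, derivMatrix F M i j * P i j := by
  have hP : P = ∑ i, ∑ j, P i j • (Pi.single i (Pi.single j 1) : Fin n → Fin n → ℝ) := by
    ext k l
    simp [Finset.sum_apply, Pi.single_apply, ite_apply]
  conv_lhs => rw [hP]
  simp only [map_sum, map_smul, smul_eq_mul, derivMatrix, of_apply, mul_comm]

theorem fderiv_eq_trace_derivMatrix_mul (F : (Fin n → Fin n → ℝ) → ℝ) (M : Fin n → Fin n → ℝ)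
    {P : Matrix (Fin n) (Fin n) ℝ} (hP : P.IsSymm) :
    fderiv ℝ F M P = (derivMatrix F M * P).trace := by
  refine (fderiv_eq_sum_derivMatrix_mul F M P).trans ?_
  simp only [trace, diag_apply, mul_apply, hP.apply]

theorem continuous_derivMatrix (hF : ContDiff ℝ 1 F) : Continuous (derivMatrix F) :=
  continuous_matrix fun _ _ => (hF.continuous_fderiv one_ne_zero).clm_apply continuous_const

theorem eq_of_posSemidef_sub_of_posDef_derivMatrix (hF : Differentiable ℝ F)
    (hElliptic : ∀ M : Fin n → Fin n → ℝ, (of M).IsSymm → (derivMatrix F M).PosDef)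
    {X Y : Matrix (Fin n) (Fin n) ℝ} (hX : X.IsSymm) (hY : Y.IsSymm) (hXY : (Y - X).PosSemidef)
    (hFXY : F X = F Y) : X = Y := by
  obtain ⟨Z, hZ, hmvt⟩ := domain_mvt (E := Fin n → Fin n → ℝ) (x := X) (y := Y)
    (fun M _ => (hF M).hasFDerivAt.hasFDerivWithinAt) convex_univ trivial trivial
  have hZsymm : (of Z).IsSymm := by
    obtain ⟨s, t, -, -, -, rfl⟩ := hZ
    exact (hX.smul s).add (hY.smul t)
  obtain ⟨lam, hlam, hle⟩ := exists_pos_forall_sub_smul_one_posSemidef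
    (isCompact_singleton (x := derivMatrix F Z))
    (by simpa only [mem_singleton_iff, forall_eq] using hElliptic Z hZsymm)
  have hzero : (derivMatrix F Z * (Y - X)).trace = 0 := by
    rw [← fderiv_eq_trace_derivMatrix_mul F Z (hY.sub hX)]
    exact hmvt.symm.trans (sub_eq_zero.mpr hFXY.symm)
  have htrace : (Y - X).trace = 0 := by
    have := mul_trace_le_trace_mul (hle _ rfl) hXY
    nlinarith [hXY.trace_nonneg]
  exact (sub_eq_zero.mp (hXY.trace_eq_zero_iff.mp htrace)).symm

end DerivMatrix

section SecondDirDeriv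

variable {n : ℕ} {u : EuclideanSpace ℝ (Fin n) → ℝ} {x : EuclideanSpace ℝ (Fin n)}

/-- The pure second derivative `u_dd` in the direction `d`, as the Hessian quadratic form at `d`. -/
noncomputable def secondDirDeriv (u : EuclideanSpace ℝ (Fin n) → ℝ) (d : Fin n → ℝ)
    (x : EuclideanSpace ℝ (Fin n)) : ℝ :=
  d ⬝ᵥ hessianMatrix u x *ᵥ d

theorem secondDirDeriv_eq_sum (u : EuclideanSpace ℝ (Fin n) → ℝ) (d : Fin n → ℝ) :
    secondDirDeriv u d =
      fun y => ∑ p : Fin n × Fin n, d p.1 * d p.2 * hessianMatrix u y p.1 p.2 := by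
  ext y
  simp only [secondDirDeriv, dotProduct, mulVec, Finset.mul_sum, Fintype.sum_prod_type]
  exact Finset.sum_congr rfl fun i _ => Finset.sum_congr rfl fun j _ => by ring

theorem contDiff_secondDirDeriv (hu : ContDiff ℝ 4 u) (d : Fin n → ℝ) :
    ContDiff ℝ 2 (secondDirDeriv u d) := by
  rw [secondDirDeriv_eq_sum]
  exact ContDiff.sum fun p _ =>
    contDiff_const.mul (contDiff_hessianMatrix_apply hu (by norm_num) p.1 p.2)

theorem contDiff_trace_mul_hessianMatrix (hu : ContDiff ℝ 4 u) (A : Matrix (Fin n) (Fin n) ℝ) :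
    ContDiff ℝ 2 fun y => (A * hessianMatrix u y).trace := by
  simp only [trace_mul_eq_sum_prod]
  exact ContDiff.sum fun p _ =>
    contDiff_const.mul (contDiff_hessianMatrix_apply hu (by norm_num) p.2 p.1)

theorem trace_mul_hessianMatrix_secondDirDeriv (hu : ContDiff ℝ 4 u)
    (A : Matrix (Fin n) (Fin n) ℝ) (d : Fin n → ℝ) :
    (A * hessianMatrix (secondDirDeriv u d) x).trace =
      secondDirDeriv (fun y => (A * hessianMatrix u y).trace) d x := by
  have hcontDiff (k l : Fin n) : ContDiff ℝ 2 fun y => hessianMatrix u y k l :=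
    contDiff_hessianMatrix_apply hu (by norm_num) k l
  have hdir : hessianMatrix (secondDirDeriv u d) x = ∑ p : Fin n × Fin n,
      (d p.1 * d p.2) • hessianMatrix (fun y => hessianMatrix u y p.1 p.2) x := by
    rw [secondDirDeriv_eq_sum]
    exact hessianMatrix_sum_const_mul _ fun p => hcontDiff p.1 p.2
  have htrace : hessianMatrix (fun y => (A * hessianMatrix u y).trace) x =
      ∑ q : Fin n × Fin n, A q.1 q.2 • hessianMatrix (fun y => hessianMatrix u y q.2 q.1) x := by
    simp only [trace_mul_eq_sum_prod]
    exact hessianMatrix_sum_const_mul _ fun q => hcontDiff q.2 q.1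
  rw [hdir, trace_mul_eq_sum_prod, secondDirDeriv_eq_sum]
  simp only [htrace, Matrix.sum_apply, Matrix.smul_apply, smul_eq_mul, Finset.mul_sum]
  rw [Finset.sum_comm]
  refine Finset.sum_congr rfl fun p _ => Finset.sum_congr rfl fun q _ => ?_
  rw [hessianMatrix_hessianMatrix_comm hu]
  ring

end SecondDirDeriv

section Equation

variable {n : ℕ} {lam Lam : ℝ} {F : (Fin n → Fin n → ℝ) → ℝ} {u : EuclideanSpace ℝ (Fin n) → ℝ}
  {a : EuclideanSpace ℝ (Fin n) → Matrix (Fin n) (Fin n) ℝ}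

theorem exists_isUniformlyElliptic_of_isCompact {K : Set (Matrix (Fin n) (Fin n) ℝ)}
    (hK : IsCompact K) (hpos : ∀ A ∈ K, A.PosDef) (ha : ∀ x, a x ∈ K) :
    ∃ lam Lam, IsUniformlyElliptic lam Lam a := by
  obtain ⟨lam, hlam, hlower⟩ := exists_pos_forall_sub_smul_one_posSemidef hK hpos
  obtain ⟨Lam, hupper⟩ := hK.bddAbove_image (f := trace) continuous_id.matrix_trace.continuousOn
  exact ⟨lam, max Lam 1, hlam, lt_max_of_lt_right one_pos, fun x => hlower _ (ha x),
    fun x => (hupper (mem_image_of_mem _ (ha x))).trans (le_max_left _ _)⟩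

theorem fderiv_sub_nonneg_of_isMinOn {E : Type*} [NormedAddCommGroup E] [NormedSpace ℝ E]
    {f : E → ℝ} {s : Set E} {x y : E} (hs : Convex ℝ s) (hf : DifferentiableAt ℝ f x)
    (hmin : IsMinOn f s x) (hx : x ∈ s) (hy : y ∈ s) : 0 ≤ fderiv ℝ f x (y - x) :=
  hmin.localize.hasFDerivWithinAt_nonneg hf.hasFDerivAt.hasFDerivWithinAt
    (sub_mem_posTangentConeAt_of_segment_subset (hs.segment_subset hx hy))

-- `D²u(x)` minimises `F` over the convex set `{F ≥ 0}`, so the linearisation of `F` there, applied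
-- to `D²u`, is a function with minimum at `x`.
theorem isMinOn_trace_derivMatrix_mul_hessianMatrix (hF : Differentiable ℝ F)
    (hLevelConvex : Convex ℝ {M : Fin n → Fin n → ℝ | (of M).IsSymm ∧ 0 ≤ F M})
    (hu : ContDiff ℝ 2 u) (hEqn : ∀ x, F (hessianMatrix u x) = 0)
    (x : EuclideanSpace ℝ (Fin n)) :
    IsMinOn (fun y => (derivMatrix F (hessianMatrix u x) * hessianMatrix u y).trace) univ x := by
  intro y _
  have hmem (z : EuclideanSpace ℝ (Fin n)) :
      hessianMatrix u z ∈ {M : Fin n → Fin n → ℝ | (of M).IsSymm ∧ 0 ≤ F M} :=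
    ⟨isSymm_hessianMatrix hu z, (hEqn z).ge⟩
  have hderiv := fderiv_sub_nonneg_of_isMinOn hLevelConvex (hF _)
    (fun M hM => (hEqn x).trans_le hM.2) (hmem x) (hmem y)
  have htrace : 0 ≤ (derivMatrix F (hessianMatrix u x) *
      (hessianMatrix u y - hessianMatrix u x)).trace :=
    hderiv.trans_eq (fderiv_eq_trace_derivMatrix_mul F (hessianMatrix u x)
      ((isSymm_hessianMatrix hu y).sub (isSymm_hessianMatrix hu x)))
  rwa [mul_sub, trace_sub, sub_nonneg] at htrace

theorem trace_derivMatrix_mul_hessianMatrix_secondDirDeriv_nonneg (hF : Differentiable ℝ F)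
    (hLevelConvex : Convex ℝ {M : Fin n → Fin n → ℝ | (of M).IsSymm ∧ 0 ≤ F M})
    (hu : ContDiff ℝ 4 u) (hEqn : ∀ x, F (hessianMatrix u x) = 0) (d : Fin n → ℝ)
    (x : EuclideanSpace ℝ (Fin n)) :
    0 ≤ (derivMatrix F (hessianMatrix u x) * hessianMatrix (secondDirDeriv u d) x).trace := by
  rw [trace_mul_hessianMatrix_secondDirDeriv hu]
  exact (posSemidef_hessianMatrix_of_isLocalMin (contDiff_trace_mul_hessianMatrix hu _)
    ((isMinOn_trace_derivMatrix_mul_hessianMatrix hF hLevelConvex (hu.of_le (by norm_num)) hEqn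
      x).isLocalMin univ_mem)).dotProduct_mulVec_nonneg d

theorem isNonnegSupersolution_sub_secondDirDeriv (hu : ContDiff ℝ 4 u) {d : Fin n → ℝ} {S : ℝ}
    (hsub : ∀ x, 0 ≤ (a x * hessianMatrix (secondDirDeriv u d) x).trace)
    (hS : ∀ x, secondDirDeriv u d x ≤ S) :
    IsNonnegSupersolution a fun x => S - secondDirDeriv u d x where
  contDiff := contDiff_const.sub (contDiff_secondDirDeriv hu d)
  nonneg x := sub_nonneg.mpr (hS x)
  trace_mul_hessianMatrix_nonpos x := by
    rw [hessianMatrix_const_sub, mul_neg, trace_neg]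
    exact neg_nonpos.mpr (hsub x)

theorem bddAbove_range_secondDirDeriv (hcompact : IsCompact (closure (range (hessianMatrix u))))
    (d : Fin n → ℝ) : BddAbove (range (secondDirDeriv u d)) := by
  refine (hcompact.bddAbove_image (continuous_dotProduct_mulVec_self d).continuousOn).mono ?_
  rintro _ ⟨x, rfl⟩
  exact mem_image_of_mem _ (subset_closure (mem_range_self x))

theorem isSymm_of_mem_closure_range_hessianMatrix (hu : ContDiff ℝ 2 u)
    {M : Matrix (Fin n) (Fin n) ℝ} (hM : M ∈ closure (range (hessianMatrix u))) : M.IsSymm :=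
  closure_minimal (range_subset_iff.mpr (isSymm_hessianMatrix hu))
    (isClosed_eq continuous_id.matrix_transpose continuous_id) hM

theorem isCompact_closure_range_hessianMatrix {C : ℝ}
    (hC : ∀ x, ‖toEuclideanCLM (𝕜 := ℝ) (hessianMatrix u x)‖ ≤ C) :
    IsCompact (closure (range (hessianMatrix u))) :=
  (isCompact_setOf_norm_toEuclideanCLM_le C).closure_of_subset (range_subset_iff.mpr hC)

theorem exists_isUniformlyElliptic_derivMatrix_hessianMatrix (hF : ContDiff ℝ 1 F)
    (hElliptic : ∀ M : Fin n → Fin n → ℝ, (of M).IsSymm → (derivMatrix F M).PosDef)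
    (hu : ContDiff ℝ 2 u) (hcompact : IsCompact (closure (range (hessianMatrix u)))) :
    ∃ lam Lam, IsUniformlyElliptic lam Lam fun x => derivMatrix F (hessianMatrix u x) :=
  exists_isUniformlyElliptic_of_isCompact
    (hcompact.image (continuous_derivMatrix hF))
    (forall_mem_image.mpr fun M hM =>
      hElliptic M (isSymm_of_mem_closure_range_hessianMatrix hu hM))
    fun x => mem_image_of_mem _ (subset_closure (mem_range_self x))

theorem exists_forall_iSup_secondDirDeriv_sub_le (ha : IsUniformlyElliptic lam Lam a)
    (hu : ContDiff ℝ 4 u)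
    (hsub : ∀ d x, 0 ≤ (a x * hessianMatrix (secondDirDeriv u d) x).trace)
    (hbdd : ∀ d, BddAbove (range (secondDirDeriv u d)))
    {ι : Type*} [Finite ι] (d : ι → Fin n → ℝ) {ε : ι → ℝ} (hε : ∀ i, 0 < ε i) :
    ∃ x, ∀ i, (⨆ y, secondDirDeriv u (d i) y) - ε i ≤ secondDirDeriv u (d i) x := by
  obtain ⟨x, hx⟩ := exists_forall_le_of_isNonnegSupersolution ha
    (fun i => isNonnegSupersolution_sub_secondDirDeriv hu (hsub (d i)) (le_ciSup (hbdd (d i))))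
    (fun i η hη => (exists_lt_of_lt_ciSup (sub_lt_self (⨆ y, secondDirDeriv u (d i) y) hη)).imp
      fun x hx => (sub_lt_comm.mp hx).le) hε
  exact ⟨x, fun i => sub_le_comm.mp (hx i)⟩

theorem exists_mem_closure_range_hessianMatrix_forall_posSemidef_sub
    (ha : IsUniformlyElliptic lam Lam a) (hu : ContDiff ℝ 4 u)
    (hsub : ∀ d x, 0 ≤ (a x * hessianMatrix (secondDirDeriv u d) x).trace)
    (hcompact : IsCompact (closure (range (hessianMatrix u)))) :
    ∃ M ∈ closure (range (hessianMatrix u)), ∀ x, (M - hessianMatrix u x).PosSemidef := by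
  have hu₂ : ContDiff ℝ 2 u := hu.of_le (by norm_num)
  have hbdd := bddAbove_range_secondDirDeriv hcompact
  let nearlyMaximal (i : (Fin n → ℝ) × Ioi (0 : ℝ)) : Set (Matrix (Fin n) (Fin n) ℝ) :=
    {M | (⨆ y, secondDirDeriv u i.1 y) - i.2 ≤ i.1 ⬝ᵥ M *ᵥ i.1}
  obtain ⟨M, hM, hmax⟩ := hcompact.inter_iInter_nonempty nearlyMaximal
    (fun i => isClosed_le continuous_const (continuous_dotProduct_mulVec_self i.1)) fun s => by
      obtain ⟨x, hx⟩ := exists_forall_iSup_secondDirDeriv_sub_le ha hu hsub hbdd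
        (fun i : s => i.1.1) fun i => i.1.2.2
      exact ⟨hessianMatrix u x, subset_closure (mem_range_self x),
        mem_iInter₂.mpr fun i hi => hx ⟨i, hi⟩⟩
  refine ⟨M, hM, fun x => .of_dotProduct_mulVec_nonneg ?_ fun d => ?_⟩
  · exact (isSymm_of_mem_closure_range_hessianMatrix hu₂ hM).sub (isSymm_hessianMatrix hu₂ x)
  have hle : (⨆ y, secondDirDeriv u d y) ≤ d ⬝ᵥ M *ᵥ d :=
    le_of_forall_sub_le fun ε hε => mem_iInter.mp hmax (d, ⟨ε, hε⟩)
  rw [star_trivial, sub_mulVec, dotProduct_sub]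
  exact sub_nonneg.mpr ((le_ciSup (hbdd d) x).trans hle)

theorem isQuadraticPoly_of_hessianMatrix_eq (hu : ContDiff ℝ 2 u)
    {M : Matrix (Fin n) (Fin n) ℝ} (hM : ∀ x, hessianMatrix u x = M) : IsQuadraticPoly u := by
  have hconst (x) : fderiv ℝ (fderiv ℝ u) x = fderiv ℝ (fderiv ℝ u) 0 := by
    ext v w
    simp only [fderiv_fderiv_apply_eq_dotProduct hu, hM]
  refine ⟨M, fun i => fderiv ℝ u 0 (EuclideanSpace.single i 1), u 0,
    hM 0 ▸ isSymm_hessianMatrix hu 0, fun x => ?_⟩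
  have hquadratic : fderiv ℝ (fderiv ℝ u) 0 x x = ∑ i, ∑ j, M i j * x i * x j := by
    rw [fderiv_fderiv_apply_eq_dotProduct hu, hM]
    simp only [dotProduct, mulVec, Finset.mul_sum]
    exact Finset.sum_congr rfl fun i _ => Finset.sum_congr rfl fun j _ => by ring
  have hlinear : fderiv ℝ u 0 x = ∑ i, fderiv ℝ u 0 (EuclideanSpace.single i 1) * x i := by
    conv_lhs => rw [← sum_smul_euclideanSpace_single x]
    simp only [map_sum, map_smul, smul_eq_mul, mul_comm]
  rw [eq_add_half_of_fderiv_fderiv_eq hu hconst x, hquadratic, hlinear]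

end Equation

theorem evans_krylov_liouville_general {n : ℕ} {F : (Fin n → Fin n → ℝ) → ℝ}
    (hF : ContDiff ℝ 1 F)
    (hElliptic : ∀ M : Fin n → Fin n → ℝ, (of M).IsSymm → (derivMatrix F M).PosDef)
    (hLevelConvex : Convex ℝ {M : Fin n → Fin n → ℝ | (of M).IsSymm ∧ 0 ≤ F M})
    {u : EuclideanSpace ℝ (Fin n) → ℝ} (hu : ContDiff ℝ 4 u)
    (hHessBdd : ∃ C : ℝ, ∀ x, ‖toEuclideanCLM (𝕜 := ℝ) (hessianMatrix u x)‖ ≤ C)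
    (hEqn : ∀ x, F (hessianMatrix u x) = 0) : IsQuadraticPoly u := by
  obtain ⟨C, hC⟩ := hHessBdd
  have hu₂ : ContDiff ℝ 2 u := hu.of_le (by norm_num)
  have hFdiff : Differentiable ℝ F := hF.differentiable one_ne_zero
  have hcompact := isCompact_closure_range_hessianMatrix hC
  obtain ⟨lam, Lam, ha⟩ :=
    exists_isUniformlyElliptic_derivMatrix_hessianMatrix hF hElliptic hu₂ hcompact
  obtain ⟨M, hM, hmax⟩ := exists_mem_closure_range_hessianMatrix_forall_posSemidef_sub ha hu
    (trace_derivMatrix_mul_hessianMatrix_secondDirDeriv_nonneg hFdiff hLevelConvex hu hEqn) hcompact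
  have hFM : F M = 0 :=
    closure_minimal (range_subset_iff.mpr hEqn) (isClosed_eq hF.continuous continuous_const) hM
  exact isQuadraticPoly_of_hessianMatrix_eq hu₂ fun x =>
    eq_of_posSemidef_sub_of_posDef_derivMatrix hFdiff hElliptic (isSymm_hessianMatrix hu₂ x)
      (isSymm_of_mem_closure_range_hessianMatrix hu₂ hM) (hmax x) ((hEqn x).trans hFM.symm)

/-- Evans–Krylov Liouville theorem: if `F` is smooth uniformly elliptic
(`DF` positive definite), the level set `{F ≥ 0}` of symmetric matrices is convex,
and `u` is an entire smooth solution of `F(D²u) = 0` with bounded Hessian,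
then `u` is a quadratic polynomial. -/
theorem evans_krylov_liouville (n : ℕ) (hn : 2 ≤ n)
    (F : (Fin n → Fin n → ℝ) → ℝ)
    (hF : ContDiff ℝ (⊤ : ℕ∞) F)
    (hElliptic : ∀ M : Fin n → Fin n → ℝ, (derivMatrix F M).PosDef)
    (hLevelConvex : Convex ℝ {M : Fin n → Fin n → ℝ | (Matrix.of M).IsSymm ∧ 0 ≤ F M})
    (u : EuclideanSpace ℝ (Fin n) → ℝ)
    (hu : ContDiff ℝ (⊤ : ℕ∞) u)
    (hHessBdd : ∃ C : ℝ, ∀ x, ‖Matrix.toEuclideanCLM (𝕜 := ℝ) (hessianMatrix u x)‖ ≤ C)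
    (hEqn : ∀ x, F (fun i j => hessianMatrix u x i j) = 0) :
    IsQuadraticPoly u :=
  evans_krylov_liouville_general (contDiff_infty.mp hF 1) (fun M _ => hElliptic M)
    hLevelConvex (contDiff_infty.mp hu 4) hHessBdd hEqn
end
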